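/- Let d ≥ 1, let f ∈ C^∞(ℝ^d) satisfy ‖(1+|x|²)^{n/2} ∂^β f‖_{L²(ℝ^d)} ≤ D₁ D₂^{n+|β|} (n!)^ν (|β|!)^μ for all n ∈ ℕ₀ and all multi-indices β ∈ ℕ₀^d, with constants D₁ > 0, D₂ ≥ 1, ν ≥ 0 and 0 ≤ μ < 1. Let δ ∈ [0,1] be such that s := δν + μ < 1, and let ρ : ℝ^d → (0,∞) be measurable with ρ(x) ≤ R(1+|x|²)^{δ/2} for all x ∈ ℝ^d (where R ≥ 1) and ρ(x) ≤ η|x| for all |x| ≥ r₀ (where η ∈ (0,1) and r₀ ≥ 1). Let ω ⊂ ℝ^d be any measurable set satisfying |B(x,ρ(x)) ∩ ω| / |B(x,ρ(x))| ≥ γ₀/(1+|x|^a) for all x ∈ ℝ^d, with some γ₀ ∈ (0,1) and some a > 0. Then there is a constant K ≥ 1, depending only on γ₀, R, r₀, η, ν, s, a and d, such that for every ε ∈ (0,1], one has ‖f‖²_{L²(ℝ^d)} ≤ exp(K·(1 + log(1/ε) + D₂^{4/(1−s)})²) · ‖f‖²_{L²(ω)} + ε D₁². -/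

import Mathlib

open MeasureTheory

/-- The partial derivative in the `i`-th coordinate direction. -/
noncomputable def pderivE {d : ℕ} (i : Fin d) (f : EuclideanSpace ℝ (Fin d) → ℝ) :
    EuclideanSpace ℝ (Fin d) → ℝ :=
  fun x => fderiv ℝ f x (EuclideanSpace.single i 1)

/-- The multi-index partial derivative `∂^β f` for `β ∈ ℕ₀^d`. -/
noncomputable def mderiv {d : ℕ} (β : Fin d → ℕ) (f : EuclideanSpace ℝ (Fin d) → ℝ) :
    EuclideanSpace ℝ (Fin d) → ℝ :=
  (List.finRange d).foldr (fun i g => (pderivE i)^[β i] g) f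



/-- Generalised Rolle theorem. -/
lemma UP_rolle (m : ℕ) : ∀ (g : ℝ → ℝ), ContDiff ℝ (⊤ : ℕ∞) g → ∀ x : ℕ → ℝ,
    (∀ i, i < m → x i < x (i + 1)) → (∀ i, i ≤ m → g (x i) = 0) →
    ∃ ξ ∈ Set.Icc (x 0) (x m), iteratedDeriv m g ξ = 0 := by
  induction m with
  | zero =>
    intro g hg x hx h0
    exact ⟨x 0, ⟨le_rfl, le_rfl⟩, by simpa using h0 0 le_rfl⟩
  | succ m ih =>
    intro g hg x hx h0
    have key : ∀ i, ∃ y, i ≤ m → (y ∈ Set.Ioo (x i) (x (i+1)) ∧ deriv g y = 0) := by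
      intro i
      by_cases hi : i ≤ m
      · obtain ⟨c, hc, hc'⟩ := exists_deriv_eq_zero (f := g) (hx i (by omega))
          hg.continuous.continuousOn (by rw [h0 i (by omega), h0 (i+1) (by omega)])
        exact ⟨c, fun _ => ⟨hc, hc'⟩⟩
      · exact ⟨0, fun h => absurd h hi⟩
    choose y hy using key
    have hd : ContDiff ℝ (⊤ : ℕ∞) (deriv g) := by
      have := (contDiff_infty_iff_deriv (𝕜 := ℝ) (f := g)).1 hg
      exact this.2
    obtain ⟨ξ, hξ, h⟩ := ih (deriv g) hd y
      (fun i hi => ((hy i (by omega)).1.2).trans (hy (i+1) (by omega)).1.1)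
      (fun i hi => (hy i hi).2)
    refine ⟨ξ, ⟨?_, ?_⟩, ?_⟩
    · exact (hy 0 (by omega)).1.1.le.trans hξ.1
    · exact hξ.2.trans (hy m le_rfl).1.2.le
    · rw [iteratedDeriv_succ']; exact h

lemma UP_iteratedDeriv_poly (P : Polynomial ℝ) (m : ℕ) :
    iteratedDeriv m (fun x => P.eval x) = fun x => (Polynomial.derivative^[m] P).eval x := by
  induction m generalizing P with
  | zero => simp
  | succ m ih =>
    rw [iteratedDeriv_succ']
    have : deriv (fun x => P.eval x) = fun x => (Polynomial.derivative P).eval x := by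
      ext x; exact P.deriv
    rw [this, ih, Function.iterate_succ_apply]

/-- Interpolation estimate. -/
lemma UP_interp (m : ℕ) (h : ℝ → ℝ) (hh : ContDiff ℝ (⊤ : ℕ∞) h) (x : ℕ → ℝ) (κ S B : ℝ)
    (hκ : 0 < κ) (hx0 : x 0 = 0) (hx1 : ∀ i, i ≤ m → x i ≤ 1)
    (hsep : ∀ i j, i < j → j ≤ m → κ ≤ x j - x i)
    (hS : ∀ i, 1 ≤ i → i ≤ m → |h (x i)| ≤ S)
    (hB : ∀ ξ ∈ Set.Icc 0 (x m), |iteratedDeriv m h ξ| ≤ B) :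
    |h 0| ≤ B / m.factorial + m * (κ⁻¹) ^ m * S := by
  classical
  set s : Finset ℕ := Finset.range (m+1) with hs
  have hinj : Set.InjOn x s := by
    intro i hi j hj hij
    simp [hs] at hi hj
    rcases lt_trichotomy i j with h1 | h1 | h1
    · have := hsep i j h1 (by omega); linarith
    · exact h1
    · have := hsep j i h1 (by omega); linarith
  set P := Lagrange.interpolate s x (fun i => h (x i)) with hP
  have hPdeg : P.degree < s.card := Lagrange.degree_interpolate_lt _ hinj
  have hPev : ∀ i ∈ s, P.eval (x i) = h (x i) := fun i hi =>
    Lagrange.eval_interpolate_at_node _ hinj hi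
  have hPs : ContDiff ℝ (⊤ : ℕ∞) (fun t => P.eval t) := by simpa using P.contDiff_aeval (𝕜 := ℝ) (⊤ : ℕ∞)
  obtain ⟨ξ, hξ, h0⟩ := UP_rolle m (fun t => h t - P.eval t) (hh.sub hPs) x
    (fun i hi => by have := hsep i (i+1) (by omega) (by omega); linarith)
    (fun i hi => by
      have := hPev i (by simp [hs]; omega)
      simp [this])
  have hsub : iteratedDeriv m h ξ = (Polynomial.derivative^[m] P).eval ξ := by
    have e := iteratedDeriv_fun_sub (n := m) (f := h) (g := fun t => P.eval t) (x := ξ)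
      ((hh.of_le (by exact_mod_cast le_top)).contDiffAt)
      ((hPs.of_le (by exact_mod_cast le_top)).contDiffAt)
    rw [h0, UP_iteratedDeriv_poly] at e
    linarith
  rw [Lagrange.eval_iterate_derivative_eq_sum hinj hPdeg (k := m) (by simp [hs])] at hsub
  have hsub2 : iteratedDeriv m h ξ =
      m.factorial * ∑ i ∈ s, h (x i) / ∏ j ∈ s.erase i, (x i - x j) := by
    rw [hsub]
    congr 1
    apply Finset.sum_congr rfl
    intro i hi
    rw [hPev i hi]
    simp [hs]
  have hfac : (0:ℝ) < m.factorial := by exact_mod_cast m.factorial_pos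
  have hsum : ∑ i ∈ s, h (x i) / ∏ j ∈ s.erase i, (x i - x j) =
      h 0 / ∏ j ∈ s.erase 0, (x 0 - x j) +
        ∑ i ∈ s.erase 0, h (x i) / ∏ j ∈ s.erase i, (x i - x j) := by
    rw [← Finset.add_sum_erase s _ (show 0 ∈ s by simp [hs]), hx0]
  set T := ∑ i ∈ s.erase 0, h (x i) / ∏ j ∈ s.erase i, (x i - x j) with hT
  set Q0 := ∏ j ∈ s.erase 0, (x 0 - x j) with hq
  have hpos : ∀ j ∈ s.erase 0, κ ≤ x j ∧ x j ≤ 1 := by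
    intro j hj
    simp [hs] at hj
    have := hsep 0 j (by omega) (by omega)
    exact ⟨by linarith, hx1 j (by omega)⟩
  have hq0 : Q0 ≠ 0 := by
    rw [hq, Finset.prod_ne_zero_iff]
    intro j hj
    have := hpos j hj
    rw [hx0]; intro h; linarith
  have hq1 : |Q0| ≤ 1 := by
    rw [hq, Finset.abs_prod]
    apply Finset.prod_le_one
    · intros; positivity
    · intro j hj
      have := hpos j hj
      rw [hx0, abs_le]; constructor <;> linarith
  have hTb : |T| ≤ m * (κ⁻¹)^m * S := by
    calc |T| ≤ ∑ i ∈ s.erase 0, |h (x i) / ∏ j ∈ s.erase i, (x i - x j)| :=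
          Finset.abs_sum_le_sum_abs _ _
      _ ≤ ∑ i ∈ s.erase 0, (κ⁻¹)^m * S := by
          apply Finset.sum_le_sum
          intro i hi
          have hi' : i ≠ 0 ∧ i < m + 1 := by simpa [hs] using hi
          rw [abs_div, Finset.abs_prod]
          have : κ^m ≤ ∏ j ∈ s.erase i, |x i - x j| := by
            have hc : (s.erase i).card = m := by
              rw [Finset.card_erase_of_mem (by simp [hs]; omega)]; simp [hs]
            calc κ^m = ∏ j ∈ s.erase i, κ := by rw [Finset.prod_const, hc]
              _ ≤ _ := by
                apply Finset.prod_le_prod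
                · intros; exact hκ.le
                · intro j hj
                  have hj' : j ≠ i ∧ j < m+1 := by simpa [hs] using hj
                  rcases lt_or_gt_of_ne hj'.1 with h1 | h1
                  · exact (hsep j i h1 (by omega)).trans (le_abs_self _)
                  · rw [abs_sub_comm]; exact (hsep i j h1 (by omega)).trans (le_abs_self _)
          rw [inv_pow, div_eq_inv_mul]
          have hSi := hS i (by omega) (by omega)
          have hκm : 0 < κ^m := by positivity
          gcongr
      _ = m * (κ⁻¹)^m * S := by
          rw [Finset.sum_const, Finset.card_erase_of_mem (by simp [hs])]
          simp [hs]; ring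
  have hmain : h 0 = Q0 * (iteratedDeriv m h ξ / m.factorial - T) := by
    rw [hsub2, hsum]; field_simp; ring
  have hBξ := hB ξ (by rw [← hx0]; exact hξ)
  rw [hmain, abs_mul]
  calc |Q0| * |iteratedDeriv m h ξ / m.factorial - T| ≤ 1 * (B / m.factorial + m * (κ⁻¹)^m * S) := by
        gcongr
        refine (abs_sub _ _).trans ?_
        rw [abs_div, abs_of_pos hfac]
        gcongr
    _ = _ := one_mul _

/-- Node selection. -/
lemma UP_nodes (κ : ℝ) (hκ : 0 < κ) (m : ℕ) : ∀ (K : Set ℝ), IsCompact K →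
    ENNReal.ofReal (m * κ) < volume K →
    ∃ x : ℕ → ℝ, (∀ i, i ≤ m → x i ∈ K) ∧ ∀ i j, i < j → j ≤ m → κ ≤ x j - x i := by
  induction m with
  | zero =>
    intro K hK hv
    have : K.Nonempty := by
      rw [Set.nonempty_iff_ne_empty]; rintro rfl; simp at hv
    obtain ⟨t, ht⟩ := this
    exact ⟨fun _ => t, fun _ _ => ht, fun i j h1 h2 => by omega⟩
  | succ m ih =>
    intro K hK hv
    have hne : K.Nonempty := by
      rw [Set.nonempty_iff_ne_empty]; rintro rfl; simp at hv
    obtain ⟨t, ht, hmin⟩ := hK.exists_isLeast hne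
    have hK' : IsCompact (K ∩ Set.Ici (t + κ)) := hK.inter_right isClosed_Ici
    have hv' : ENNReal.ofReal (m * κ) < volume (K ∩ Set.Ici (t+κ)) := by
      by_contra hcon
      push Not at hcon
      have h1 : K ⊆ (K ∩ Set.Ici (t+κ)) ∪ Set.Ico t (t+κ) := by
        intro y hy
        by_cases h : t + κ ≤ y
        · left; exact ⟨hy, h⟩
        · right; exact ⟨hmin hy, by linarith⟩
      have h2 : volume K ≤ ENNReal.ofReal (m * κ) + ENNReal.ofReal κ := by
        refine (measure_mono h1).trans ((measure_union_le _ _).trans ?_)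
        gcongr
        simp
      rw [← ENNReal.ofReal_add (by positivity) hκ.le] at h2
      refine absurd hv (not_lt.2 (h2.trans_eq ?_))
      push_cast; congr 1; ring
    obtain ⟨x, hx, hsep⟩ := ih _ hK' hv'
    refine ⟨fun i => if i = 0 then t else x (i-1), ?_, ?_⟩
    · intro i hi
      by_cases h : i = 0
      · simp [h, ht]
      · simp [h]; exact (hx (i-1) (by omega)).1
    · intro i j hij hj
      have hj0 : j ≠ 0 := by omega
      by_cases h : i = 0
      · simp [h, hj0]
        have := (hx (j-1) (by omega)).2
        simp at this; linarith
      · simp [h, hj0]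
        exact hsep (i-1) (j-1) (by omega) (by omega)

/-- Iterated partial derivatives along a word. -/
noncomputable def UP_DW {d : ℕ} (w : List (Fin d)) (f : EuclideanSpace ℝ (Fin d) → ℝ) :
    EuclideanSpace ℝ (Fin d) → ℝ :=
  w.foldr (fun i g => pderivE i g) f

lemma UP_pderiv_smooth {d : ℕ} (i : Fin d) {f : EuclideanSpace ℝ (Fin d) → ℝ}
    (hf : ContDiff ℝ (⊤ : ℕ∞) f) : ContDiff ℝ (⊤ : ℕ∞) (pderivE i f) := by
  unfold pderivE
  have h1 : ContDiff ℝ (⊤ : ℕ∞) (fderiv ℝ f) := hf.fderiv_right (by simp)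
  exact h1.clm_apply contDiff_const

lemma UP_DW_smooth {d : ℕ} (w : List (Fin d)) {f : EuclideanSpace ℝ (Fin d) → ℝ}
    (hf : ContDiff ℝ (⊤ : ℕ∞) f) : ContDiff ℝ (⊤ : ℕ∞) (UP_DW w f) := by
  induction w with
  | nil => exact hf
  | cons i w ih => exact UP_pderiv_smooth i ih

lemma UP_DW_append {d : ℕ} (u w : List (Fin d)) (f : EuclideanSpace ℝ (Fin d) → ℝ) :
    UP_DW (u ++ w) f = UP_DW u (UP_DW w f) := by
  simp [UP_DW, List.foldr_append]

lemma UP_pderiv_comm {d : ℕ} (i j : Fin d) {f : EuclideanSpace ℝ (Fin d) → ℝ}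
    (hf : ContDiff ℝ (⊤ : ℕ∞) f) : pderivE i (pderivE j f) = pderivE j (pderivE i f) := by
  have h1 : ContDiff ℝ (⊤ : ℕ∞) (fderiv ℝ f) := hf.fderiv_right (by simp)
  have h2 : Differentiable ℝ (fderiv ℝ f) := h1.differentiable (by simp)
  have key : ∀ a b : Fin d, ∀ x, pderivE a (pderivE b f) x =
      fderiv ℝ (fderiv ℝ f) x (EuclideanSpace.single a 1) (EuclideanSpace.single b 1) := by
    intro a b x
    unfold pderivE
    rw [fderiv_clm_apply (h2 x) (differentiableAt_const _)]
    simp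
  ext x
  rw [key, key]
  have : IsSymmSndFDerivAt ℝ f x := by
    apply ContDiffAt.isSymmSndFDerivAt (n := (⊤ : ℕ∞)) hf.contDiffAt
    simp only [minSmoothness_of_isRCLikeNormedField]
    exact WithTop.coe_le_coe.2 (le_top : (2:ℕ∞) ≤ ⊤)
  exact this _ _

lemma UP_DW_perm {d : ℕ} {u w : List (Fin d)} (h : u.Perm w)
    {f : EuclideanSpace ℝ (Fin d) → ℝ} (hf : ContDiff ℝ (⊤ : ℕ∞) f) :
    UP_DW u f = UP_DW w f := by
  induction h with
  | nil => rfl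
  | cons x _ ih => simp only [UP_DW, List.foldr_cons] at ih ⊢; rw [ih]
  | swap x y l =>
    simp only [UP_DW, List.foldr_cons]
    exact UP_pderiv_comm y x (UP_DW_smooth l hf)
  | trans _ _ ih1 ih2 => exact ih1.trans ih2

lemma UP_DW_replicate {d : ℕ} (i : Fin d) (n : ℕ) (f : EuclideanSpace ℝ (Fin d) → ℝ) :
    UP_DW (List.replicate n i) f = (pderivE i)^[n] f := by
  induction n with
  | zero => rfl
  | succ n ih =>
    rw [Function.iterate_succ_apply', ← ih]; simp [UP_DW, List.replicate_succ]

lemma UP_mderiv_eq {d : ℕ} (β : Fin d → ℕ) (f : EuclideanSpace ℝ (Fin d) → ℝ) :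
    mderiv β f = UP_DW ((List.finRange d).flatMap (fun i => List.replicate (β i) i)) f := by
  unfold mderiv
  induction (List.finRange d) with
  | nil => rfl
  | cons i l ih =>
    rw [List.flatMap_cons, UP_DW_append, ← ih, UP_DW_replicate]; rfl

lemma UP_DW_eq_mderiv {d : ℕ} (w : List (Fin d)) {f : EuclideanSpace ℝ (Fin d) → ℝ}
    (hf : ContDiff ℝ (⊤ : ℕ∞) f) : UP_DW w f = mderiv (fun i => w.count i) f := by
  rw [UP_mderiv_eq]
  apply UP_DW_perm _ hf
  rw [List.perm_iff_count]
  intro a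
  rw [List.count_flatMap]
  have : (List.map (List.count a ∘ fun i => List.replicate (List.count i w) i) (List.finRange d))
      = List.map (fun i => if i = a then List.count a w else 0) (List.finRange d) := by
    apply List.map_congr_left
    intro i _
    simp only [Function.comp, List.count_replicate]
    by_cases h : i = a
    · simp [h]
    · simp [h]
  rw [this, ← List.ofFn_eq_map, List.sum_ofFn]
  simp

lemma UP_sum_count {d : ℕ} (w : List (Fin d)) : ∑ i, w.count i = w.length := by
  induction w with
  | nil => simp
  | cons a w ih =>
    simp only [List.count_cons, Finset.sum_add_distrib, ih, List.length_cons]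
    simp

/-- Directional derivatives. -/
lemma UP_dir {d : ℕ} (y z : EuclideanSpace ℝ (Fin d)) (t : ℝ) (m : ℕ) :
    ∀ (g : EuclideanSpace ℝ (Fin d) → ℝ), ContDiff ℝ (⊤ : ℕ∞) g → ∀ B : ℝ,
    (∀ w : List (Fin d), w.length = m → |UP_DW w g (y + t • z)| ≤ B) →
    |iteratedDeriv m (fun s : ℝ => g (y + s • z)) t| ≤ (d * ‖z‖) ^ m * B := by
  induction m with
  | zero =>
    intro g hg B hB
    simpa [UP_DW] using hB [] rfl
  | succ m ih =>
    intro g hg B hB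
    have hline : ContDiff ℝ (⊤ : ℕ∞) (fun s : ℝ => y + s • z) := by fun_prop
    have hd : deriv (fun s : ℝ => g (y + s • z)) =
        fun s => ∑ i, z i * pderivE i g (y + s • z) := by
      ext s
      have h1 : HasDerivAt (fun s : ℝ => y + s • z) z s := by
        simpa using ((hasDerivAt_id s).smul_const z).const_add y
      have h2 := (hg.differentiable (by simp) (y + s • z)).hasFDerivAt.comp_hasDerivAt s h1
      have h3 : deriv (fun s : ℝ => g (y + s • z)) s = fderiv ℝ g (y + s • z) z := h2.deriv
      rw [h3]
      have hz : z = ∑ i, z i • EuclideanSpace.single i (1:ℝ) := by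
        have := (EuclideanSpace.basisFun (Fin d) ℝ).sum_repr z
        simpa using this.symm
      generalize y + s • z = p
      conv_lhs => rw [hz]
      simp [pderivE]
    rw [iteratedDeriv_succ', hd, iteratedDeriv_fun_sum]
    · calc |∑ i, iteratedDeriv m (fun s => z i * pderivE i g (y + s • z)) t|
          ≤ ∑ i : Fin d, |iteratedDeriv m (fun s => z i * pderivE i g (y + s • z)) t| :=
            Finset.abs_sum_le_sum_abs _ _
        _ ≤ ∑ i : Fin d, ‖z‖ * ((d * ‖z‖) ^ m * B) := by
            apply Finset.sum_le_sum
            intro i _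
            rw [iteratedDeriv_const_mul_field, abs_mul]
            gcongr
            · exact PiLp.norm_apply_le z i
            · apply ih _ (UP_pderiv_smooth i hg)
              intro w hw
              have := hB (w ++ [i]) (by simp [hw])
              rwa [UP_DW_append] at this
        _ = _ := by simp; ring
    · intro i _
      apply ContDiff.contDiffAt
      exact (contDiff_const.mul ((UP_pderiv_smooth i hg).comp hline)).of_le (by exact_mod_cast le_top)

lemma UP_sob1 (φ : ℝ → ℝ) (hφ : ContDiff ℝ (⊤ : ℕ∞) φ) (b s : ℝ) (hs : s ∈ Set.Icc b (b+1)) :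
    ‖φ s‖ₑ ≤ ∫⁻ t in Set.Icc b (b+1), (‖φ t‖ₑ + ‖deriv φ t‖ₑ) := by
  have hd : Continuous (deriv φ) := ((contDiff_infty_iff_deriv (𝕜 := ℝ) (f := φ)).1 hφ).2.continuous
  set c := ∫⁻ t in Set.Icc b (b+1), ‖deriv φ t‖ₑ with hc
  have key : ∀ t ∈ Set.Icc b (b+1), ‖φ s‖ₑ ≤ ‖φ t‖ₑ + c := by
    intro t ht
    have h1 : ∫ r in t..s, deriv φ r = φ s - φ t :=
      intervalIntegral.integral_deriv_eq_sub (fun x _ => hφ.differentiable (by simp) x)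
        (hd.intervalIntegrable _ _)
    have h2 : ‖φ s - φ t‖ₑ ≤ c := by
      rw [← h1]
      have e : ‖∫ r in t..s, deriv φ r‖ₑ = ‖∫ r in Set.uIoc t s, deriv φ r‖ₑ := by
        rw [← ofReal_norm, ← ofReal_norm, intervalIntegral.norm_intervalIntegral_eq]
      rw [e]
      refine (enorm_integral_le_lintegral_enorm _).trans ?_
      apply lintegral_mono_set
      refine Set.uIoc_subset_uIcc.trans ?_
      exact Set.uIcc_subset_Icc ht hs
    calc ‖φ s‖ₑ = ‖φ t + (φ s - φ t)‖ₑ := by ring_nf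
      _ ≤ ‖φ t‖ₑ + ‖φ s - φ t‖ₑ := enorm_add_le _ _
      _ ≤ _ := by gcongr
  have hv : volume (Set.Icc b (b+1)) = 1 := by simp
  calc ‖φ s‖ₑ = ∫⁻ t in Set.Icc b (b+1), ‖φ s‖ₑ := by simp
    _ ≤ ∫⁻ t in Set.Icc b (b+1), (‖φ t‖ₑ + c) := setLIntegral_mono' measurableSet_Icc key
    _ = _ := by
      rw [lintegral_add_right _ measurable_const, lintegral_add_left (by
        exact hφ.continuous.measurable.enorm)]
      simp [hc]

lemma UP_sob_ind {d : ℕ} (b : Fin d → ℝ) (s : Finset (Fin d)) :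
    ∀ (g : EuclideanSpace ℝ (Fin d) → ℝ), ContDiff ℝ (⊤ : ℕ∞) g →
    ∀ H : (Fin d → ℝ) → ENNReal, Measurable H →
    (∀ u : List (Fin d), u.length ≤ s.card → ∀ x : Fin d → ℝ, ‖UP_DW u g (WithLp.toLp 2 x)‖ₑ ≤ H x) →
    ∀ x : Fin d → ℝ, (∀ i, x i ∈ Set.Icc (b i) (b i + 1)) →
    ‖g (WithLp.toLp 2 x)‖ₑ ≤ 2 ^ s.card *
      (lmarginal (fun i => volume.restrict (Set.Icc (b i) (b i + 1))) s H) x := by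
  induction s using Finset.induction_on with
  | empty =>
    intro g hg H hH hb x hx
    simpa [UP_DW] using hb [] (by simp) x
  | insert i s hi ih =>
    intro g hg H hH hb x hx
    rw [Finset.card_insert_of_notMem hi] at hb ⊢
    rw [lmarginal_insert _ hH hi]
    set φ : ℝ → ℝ := fun t => g (WithLp.toLp 2 (Function.update x i t)) with hφ
    have hline : ∀ t, WithLp.toLp 2 (Function.update x i t) =
        WithLp.toLp 2 (Function.update x i 0) + t • EuclideanSpace.single i (1:ℝ) := by
      intro t
      ext j
      by_cases h : j = i
      · subst h; simp
      · simp [h]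
    have hφ' : φ = fun t => g (WithLp.toLp 2 (Function.update x i 0) +
        t • EuclideanSpace.single i (1:ℝ)) := by
      ext t; simp only [hφ]; rw [hline]
    have hsm : ContDiff ℝ (⊤ : ℕ∞) φ := by
      rw [hφ']; exact hg.comp (by fun_prop)
    have hder : ∀ t, deriv φ t = pderivE i g (WithLp.toLp 2 (Function.update x i t)) := by
      intro t
      rw [hline, hφ']
      have h1 : HasDerivAt (fun s : ℝ => WithLp.toLp 2 (Function.update x i 0) +
        s • EuclideanSpace.single i (1:ℝ)) (EuclideanSpace.single i (1:ℝ)) t := by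
        simpa using ((hasDerivAt_id t).smul_const (EuclideanSpace.single i (1:ℝ))).const_add
          (WithLp.toLp 2 (Function.update x i 0))
      exact ((hg.differentiable (by simp) _).hasFDerivAt.comp_hasDerivAt t h1).deriv
    have h0 := UP_sob1 φ hsm (b i) (x i) (hx i)
    have hx' : φ (x i) = g (WithLp.toLp 2 x) := by simp [hφ]
    rw [hx'] at h0
    refine h0.trans ?_
    rw [← lintegral_const_mul' _ _ (by simp)]
    refine setLIntegral_mono' measurableSet_Icc ?_
    intro t ht
    have hup : ∀ j, Function.update x i t j ∈ Set.Icc (b j) (b j + 1) := by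
      intro j
      by_cases h : j = i
      · subst h; simpa using ht
      · simpa [h] using hx j
    have e1 := ih g hg H hH (fun u hu x => hb u (by omega) x) _ hup
    have e2 := ih (pderivE i g) (UP_pderiv_smooth i hg) H hH (fun u hu x => by
      have := hb (u ++ [i]) (by simp; omega) x
      rwa [UP_DW_append] at this) _ hup
    rw [hder]
    calc _ ≤ _ := add_le_add e1 e2
      _ = _ := by rw [pow_succ]; ring

lemma UP_sobolev (d : ℕ) : ∃ C : ℝ, 1 ≤ C ∧ ∀ (g : EuclideanSpace ℝ (Fin d) → ℝ),
    ContDiff ℝ (⊤ : ℕ∞) g → ∀ (n : ℕ) (M : ℝ), 0 ≤ M →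
    (∀ u : List (Fin d), u.length ≤ d →
      eLpNorm (fun x => (1 + ‖x‖ ^ 2) ^ ((n : ℝ) / 2) * UP_DW u g x) 2 volume ≤ ENNReal.ofReal M) →
    ∀ x, (1 + ‖x‖ ^ 2) ^ ((n : ℝ) / 2) * |g x| ≤ C ^ (n+1) * M := by
  classical
  set T : Finset (List (Fin d)) := (List.finite_length_le (Fin d) d).toFinset with hT
  have hTm : ∀ u, u ∈ T ↔ u.length ≤ d := by intro u; simp [hT]
  set C0 : ℝ := 2 ^ d * (T.card + 1) with hC0
  set C1 : ℝ := 2 + 2 * d with hC1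
  have hC1' : 1 ≤ C1 := by
    have : (0:ℝ) ≤ d := by positivity
    linarith
  have hC0' : 1 ≤ C0 := by
    have h1 : (1:ℝ) ≤ 2^d := one_le_pow₀ (by norm_num)
    have h2 : (0:ℝ) ≤ T.card := by positivity
    nlinarith
  refine ⟨C0 * C1, by nlinarith, ?_⟩
  intro g hg n M hM hb x
  set b : Fin d → ℝ := fun i => x i with hbdef
  set μ : Fin d → Measure ℝ := fun i => volume.restrict (Set.Icc (b i) (b i + 1)) with hμ
  have hprob : ∀ i, IsProbabilityMeasure (μ i) := fun i => ⟨by simp [hμ]⟩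
  set H : (Fin d → ℝ) → ENNReal := fun z => ∑ u ∈ T, ‖UP_DW u g (WithLp.toLp 2 z)‖ₑ with hH
  have hmeas : ∀ u, Continuous (fun z : Fin d → ℝ => UP_DW u g (WithLp.toLp 2 z)) := fun u =>
    (UP_DW_smooth u hg).continuous.comp (PiLp.continuous_toLp 2 _)
  have hHm : Measurable H := by
    apply Finset.measurable_sum
    intro u _
    exact (hmeas u).measurable.enorm
  have h1 := UP_sob_ind b Finset.univ g hg H hHm (by
    intro u hu z
    have hu' : u ∈ T := by rw [hTm]; simpa using hu
    exact Finset.single_le_sum (f := fun u => ‖UP_DW u g (WithLp.toLp 2 z)‖ₑ) (by simp) hu')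
    (fun i => x i) (fun i => ⟨le_rfl, by simp [hbdef]⟩)
  rw [lmarginal_univ] at h1
  have hpi : Measure.pi μ = (volume : Measure (Fin d → ℝ)).restrict
      (Set.univ.pi fun i => Set.Icc (b i) (b i + 1)) := by
    rw [volume_pi, Measure.restrict_pi_pi]
  have hpi_le : Measure.pi μ ≤ (volume : Measure (Fin d → ℝ)) := by
    rw [hpi]; exact Measure.restrict_le_self
  have hBm : MeasurableSet (Set.univ.pi fun i => Set.Icc (b i) (b i + 1)) :=
    MeasurableSet.univ_pi fun i => measurableSet_Icc
  set W : EuclideanSpace ℝ (Fin d) → ℝ := fun z => (1 + ‖z‖ ^ 2) ^ ((n : ℝ) / 2) with hW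
  have hW0 : ∀ z, 0 ≤ W z := fun z => by positivity
  have hWc : Continuous W := by
    apply Continuous.rpow_const
    · fun_prop
    · intro z; left; positivity
  have hcmp : ∀ z ∈ (Set.univ.pi fun i => Set.Icc (b i) (b i + 1)),
      W x ≤ C1 ^ n * W (WithLp.toLp 2 z) := by
    intro z hz
    set zz : EuclideanSpace ℝ (Fin d) := WithLp.toLp 2 z
    have hdist : ‖x - zz‖ ^ 2 ≤ d := by
      rw [EuclideanSpace.norm_sq_eq]
      calc ∑ i, ‖(x - zz) i‖^2 ≤ ∑ i : Fin d, (1:ℝ) := by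
            apply Finset.sum_le_sum
            intro i _
            have := hz i (Set.mem_univ i)
            simp only [Set.mem_Icc, hbdef] at this
            have e : (x - zz) i = x i - z i := by simp [zz]
            rw [e, Real.norm_eq_abs, sq_abs]
            nlinarith
        _ = d := by simp
    have hn : ‖x‖ ≤ ‖zz‖ + ‖x - zz‖ := by
      have := norm_add_le zz (x - zz); simpa using this
    have h2 : 1 + ‖x‖^2 ≤ C1 * (1 + ‖zz‖^2) := by
      have a1 : ‖x‖^2 ≤ 2 * ‖zz‖^2 + 2 * ‖x-zz‖^2 := by
        have := norm_nonneg x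
        nlinarith [sq_nonneg (‖zz‖ - ‖x - zz‖)]
      have : (0:ℝ) ≤ d * ‖zz‖^2 := by positivity
      simp only [hC1]; nlinarith
    calc W x ≤ (C1 * (1 + ‖zz‖^2)) ^ ((n:ℝ)/2) := by
          apply Real.rpow_le_rpow (by positivity) h2 (by positivity)
      _ = C1 ^ ((n:ℝ)/2) * W zz := by rw [Real.mul_rpow (by linarith) (by positivity)]
      _ ≤ C1 ^ n * W zz := by
          gcongr
          rw [← Real.rpow_natCast]
          apply Real.rpow_le_rpow_of_exponent_le hC1'
          have : (0:ℝ) ≤ n := by positivity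
          linarith
  have h2 : ENNReal.ofReal (W x) * ∫⁻ z, H z ∂Measure.pi μ ≤
      ENNReal.ofReal (C1 ^ n) * (T.card * ENNReal.ofReal M) := by
    rw [← lintegral_const_mul _ hHm]
    calc ∫⁻ z, ENNReal.ofReal (W x) * H z ∂Measure.pi μ
        ≤ ∫⁻ z, ENNReal.ofReal (C1^n) *
            ∑ u ∈ T, ‖W (WithLp.toLp 2 z) * UP_DW u g (WithLp.toLp 2 z)‖ₑ ∂Measure.pi μ := by
          rw [hpi]
          refine setLIntegral_mono' hBm ?_
          intro z hz
          have := hcmp z hz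
          calc _ ≤ ENNReal.ofReal (C1 ^ n * W (WithLp.toLp 2 z)) * H z := by gcongr
            _ = _ := by
              rw [ENNReal.ofReal_mul (by positivity), mul_assoc, hH, Finset.mul_sum]
              congr 1
              apply Finset.sum_congr rfl
              intro u _
              rw [enorm_mul, Real.enorm_of_nonneg (hW0 _)]
      _ = ENNReal.ofReal (C1^n) * ∑ u ∈ T,
            ∫⁻ z, ‖W (WithLp.toLp 2 z) * UP_DW u g (WithLp.toLp 2 z)‖ₑ ∂Measure.pi μ := by
          have hm : ∀ u, Measurable fun z : Fin d → ℝ =>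
              ‖W (WithLp.toLp 2 z) * UP_DW u g (WithLp.toLp 2 z)‖ₑ := fun u =>
            ((hWc.comp (PiLp.continuous_toLp 2 _)).mul (hmeas u)).measurable.enorm
          rw [lintegral_const_mul _ (Finset.measurable_sum _ fun u _ => hm u),
            lintegral_finsetSum _ fun u _ => hm u]
      _ ≤ ENNReal.ofReal (C1^n) * ∑ u ∈ T, ENNReal.ofReal M := by
          gcongr with u hu
          have hcont : Continuous (fun z : EuclideanSpace ℝ (Fin d) => W z * UP_DW u g z) :=
            hWc.mul (UP_DW_smooth u hg).continuous
          have hcont2 : Continuous ((fun z : EuclideanSpace ℝ (Fin d) => W z * UP_DW u g z) ∘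
            (WithLp.toLp 2)) := hcont.comp (PiLp.continuous_toLp 2 _)
          calc _ = eLpNorm ((fun z : EuclideanSpace ℝ (Fin d) => W z * UP_DW u g z) ∘
                (WithLp.toLp 2)) 1 (Measure.pi μ) := by
                rw [eLpNorm_one_eq_lintegral_enorm]; rfl
            _ ≤ eLpNorm ((fun z : EuclideanSpace ℝ (Fin d) => W z * UP_DW u g z) ∘
                (WithLp.toLp 2)) 2 (Measure.pi μ) :=
                eLpNorm_le_eLpNorm_of_exponent_le (by norm_num) hcont2.aestronglyMeasurable
            _ ≤ eLpNorm ((fun z : EuclideanSpace ℝ (Fin d) => W z * UP_DW u g z) ∘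
                (WithLp.toLp 2)) 2 volume := eLpNorm_mono_measure _ hpi_le
            _ = eLpNorm (fun z : EuclideanSpace ℝ (Fin d) => W z * UP_DW u g z) 2 volume :=
                eLpNorm_comp_measurePreserving hcont.aestronglyMeasurable
                  (PiLp.volume_preserving_toLp (Fin d))
            _ ≤ _ := hb u ((hTm u).1 hu)
      _ = _ := by simp
  have h3 : ENNReal.ofReal (W x * |g x|) ≤ ENNReal.ofReal (2 ^ d * (C1 ^ n * (T.card * M))) := by
    rw [ENNReal.ofReal_mul (hW0 x)]
    have e : ENNReal.ofReal |g x| = ‖g x‖ₑ := by rw [← ofReal_norm]; rfl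
    rw [e]
    have h1' : ‖g x‖ₑ ≤ 2 ^ d * ∫⁻ z, H z ∂Measure.pi μ := by simpa using h1
    calc _ ≤ ENNReal.ofReal (W x) * (2 ^ d * ∫⁻ z, H z ∂Measure.pi μ) := by gcongr
      _ = 2 ^ d * (ENNReal.ofReal (W x) * ∫⁻ z, H z ∂Measure.pi μ) := by ring
      _ ≤ 2 ^ d * (ENNReal.ofReal (C1 ^ n) * (T.card * ENNReal.ofReal M)) := by gcongr
      _ = _ := by
        rw [ENNReal.ofReal_mul (by positivity), ENNReal.ofReal_mul (by positivity),
          ENNReal.ofReal_mul (by positivity)]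
        congr 1
        · simp [ENNReal.ofReal_pow]
        · simp
  rw [ENNReal.ofReal_le_ofReal_iff (by positivity)] at h3
  refine h3.trans ?_
  have hTc : (0:ℝ) ≤ T.card := by positivity
  have a1 : C1 ^ n ≤ C1 ^ (n+1) := pow_le_pow_right₀ hC1' (by omega)
  have a2 : C0 ≤ C0 ^ (n+1) := le_self_pow₀ hC0' (by omega)
  calc 2 ^ d * (C1 ^ n * (T.card * M)) = (2^d * T.card) * C1 ^ n * M := by ring
    _ ≤ C0 ^ (n+1) * C1 ^ (n+1) * M := by
        gcongr
        refine le_trans ?_ a2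
        simp only [hC0]; gcongr; linarith
    _ = _ := by rw [mul_pow C0 C1]

lemma UP_ray {d : ℕ} (x y : EuclideanSpace ℝ (Fin d)) (ρ γ : ℝ) (hρ : 0 < ρ) (hγ : 0 < γ)
    (W : Set (EuclideanSpace ℝ (Fin d))) (hW : MeasurableSet W) (hWs : W ⊆ Metric.ball x ρ)
    (hy : y ∈ Metric.ball x ρ)
    (hv : ENNReal.ofReal γ * volume (Metric.ball x ρ) ≤ volume W) :
    ∃ z : EuclideanSpace ℝ (Fin d), ‖z‖ ≤ 4 * ρ ∧
      ENNReal.ofReal (γ / 4 ^ (d+1)) < volume {t : ℝ | t ∈ Set.Icc (1/2 : ℝ) 1 ∧ y + t • z ∈ W} := by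
  by_contra hcon
  push Not at hcon
  set F : EuclideanSpace ℝ (Fin d) → ℝ → ENNReal := fun z t => W.indicator 1 (y + t • z) with hF
  have hmeasset : MeasurableSet {p : EuclideanSpace ℝ (Fin d) × ℝ | y + p.2 • p.1 ∈ W} := by
    have : Measurable (fun p : EuclideanSpace ℝ (Fin d) × ℝ => y + p.2 • p.1) := by fun_prop
    exact this hW
  have hFm : Measurable (Function.uncurry F) := by
    have : Function.uncurry F = {p : EuclideanSpace ℝ (Fin d) × ℝ | y + p.2 • p.1 ∈ W}.indicator 1 := by
      ext p; simp [hF, Function.uncurry, Set.indicator]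
    rw [this]
    exact measurable_one.indicator hmeasset
  have hswap := lintegral_lintegral_swap (μ := volume.restrict (Metric.ball (0 : EuclideanSpace ℝ (Fin d)) (4*ρ)))
    (ν := volume.restrict (Set.Icc (1/2 : ℝ) 1)) (f := F) hFm.aemeasurable
  have hl : ∫⁻ z in Metric.ball (0 : EuclideanSpace ℝ (Fin d)) (4*ρ), ∫⁻ t in Set.Icc (1/2 : ℝ) 1, F z t
      ≤ ENNReal.ofReal (γ / 4 ^ (d+1)) * volume (Metric.ball (0 : EuclideanSpace ℝ (Fin d)) (4*ρ)) := by
    rw [← setLIntegral_const]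
    refine setLIntegral_mono' Metric.isOpen_ball.measurableSet ?_
    intro z hz
    refine le_trans (le_of_eq ?_) (hcon z (by simpa using (mem_ball_zero_iff.1 hz).le))
    have hm : MeasurableSet {t : ℝ | y + t • z ∈ W} := by
      have : Measurable (fun t : ℝ => y + t • z) := by fun_prop
      exact this hW
    have : (fun t => F z t) = {t : ℝ | y + t • z ∈ W}.indicator 1 := by
      ext t; simp [hF, Set.indicator]
    rw [this, lintegral_indicator_one hm, Measure.restrict_apply hm]
    congr 1
    ext t; simp [and_comm]
  have hr : ENNReal.ofReal (1/2) * volume W ≤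
      ∫⁻ t in Set.Icc (1/2 : ℝ) 1, ∫⁻ z in Metric.ball (0 : EuclideanSpace ℝ (Fin d)) (4*ρ), F z t := by
    have e : ENNReal.ofReal (1/2) * volume W = ∫⁻ t in Set.Icc (1/2 : ℝ) 1, volume W := by
      rw [setLIntegral_const, Real.volume_Icc, mul_comm]; norm_num
    rw [e]
    refine setLIntegral_mono' measurableSet_Icc ?_
    intro t ht
    have ht0 : 0 < t := by have := ht.1; linarith
    have hm : MeasurableSet {z : EuclideanSpace ℝ (Fin d) | y + t • z ∈ W} := by
      have : Measurable (fun z : EuclideanSpace ℝ (Fin d) => y + t • z) := by fun_prop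
      exact this hW
    have : (fun z => F z t) = {z : EuclideanSpace ℝ (Fin d) | y + t • z ∈ W}.indicator 1 := by
      ext z; simp [hF, Set.indicator]
    rw [this, lintegral_indicator_one hm, Measure.restrict_apply hm]
    have hsub : {z : EuclideanSpace ℝ (Fin d) | y + t • z ∈ W} ∩ Metric.ball 0 (4*ρ) =
        (fun z => t • z) ⁻¹' ((fun z => y + z) ⁻¹' W) := by
      ext z
      simp only [Set.mem_inter_iff, Set.mem_ofPred_eq, mem_ball_zero_iff, Set.mem_preimage]
      refine ⟨fun h => h.1, fun h => ⟨h, ?_⟩⟩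
      have h1 := hWs h
      have h2 : ‖t • z‖ < 2 * ρ := by
        have h3 : t • z = (y + t • z - x) - (y - x) := by abel
        rw [h3]
        have h4 := norm_sub_le (y + t • z - x) (y - x)
        rw [mem_ball_iff_norm] at h1 hy
        linarith
      rw [norm_smul, Real.norm_of_nonneg ht0.le] at h2
      have h5 := ht.1
      have := norm_nonneg z
      nlinarith
    rw [hsub, Measure.addHaar_preimage_smul _ ht0.ne', measure_preimage_add]
    have hone : (1 : ENNReal) ≤ ENNReal.ofReal |(t ^ Module.finrank ℝ (EuclideanSpace ℝ (Fin d)))⁻¹| := by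
      rw [ENNReal.one_le_ofReal, abs_of_pos (by positivity)]
      exact (one_le_inv₀ (by positivity)).2 (pow_le_one₀ ht0.le ht.2)
    calc volume W = 1 * volume W := by simp
      _ ≤ _ := by gcongr
  rw [← hswap] at hr
  have hfin := hr.trans hl
  have hb : volume (Metric.ball (0 : EuclideanSpace ℝ (Fin d)) (4*ρ)) =
      ENNReal.ofReal (4^d) * volume (Metric.ball x ρ) := by
    rw [Measure.addHaar_ball_mul_of_pos _ _ (by norm_num), ← Measure.addHaar_ball_center _ x]
    simp
  rw [hb, ← mul_assoc, ← ENNReal.ofReal_mul (by positivity)] at hfin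
  have hpos : 0 < volume (Metric.ball x ρ) := Metric.measure_ball_pos _ _ hρ
  have hlt : volume (Metric.ball x ρ) < ⊤ := measure_ball_lt_top
  have h5 : ENNReal.ofReal (1/2) * (ENNReal.ofReal γ * volume (Metric.ball x ρ)) ≤
      ENNReal.ofReal (γ / 4 ^ (d + 1) * 4 ^ d) * volume (Metric.ball x ρ) :=
    (mul_le_mul_right hv _).trans hfin
  rw [← mul_assoc, ← ENNReal.ofReal_mul (by positivity),
    ENNReal.mul_le_mul_iff_left hpos.ne' hlt.ne, ENNReal.ofReal_le_ofReal_iff (by positivity)] at h5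
  have : γ / 4 ^ (d + 1) * 4 ^ d = γ / 4 := by
    rw [pow_succ]; field_simp
  rw [this] at h5
  linarith

lemma UP_local {d : ℕ} (f : EuclideanSpace ℝ (Fin d) → ℝ) (hf : ContDiff ℝ (⊤ : ℕ∞) f)
    (x : EuclideanSpace ℝ (Fin d)) (ρ γ S B : ℝ) (hρ : 0 < ρ) (hγ : 0 < γ) (hγ1 : γ ≤ 1)
    (W : Set (EuclideanSpace ℝ (Fin d))) (hW : MeasurableSet W) (hWs : W ⊆ Metric.ball x ρ)
    (hv : ENNReal.ofReal γ * volume (Metric.ball x ρ) ≤ volume W)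
    (hS : ∀ z ∈ W, |f z| ≤ S) (m : ℕ) (hm : 1 ≤ m) (hB0 : 0 ≤ B)
    (hB : ∀ w : List (Fin d), w.length = m → ∀ z ∈ Metric.ball x ρ, |UP_DW w f z| ≤ B) :
    ∀ y ∈ Metric.ball x ρ, |f y| ≤ (d * (4 * ρ)) ^ m * B / m.factorial +
      m * (4 ^ (d+1) * m / γ) ^ m * S := by
  intro y hy
  obtain ⟨z, hz, hvol⟩ := UP_ray x y ρ γ hρ hγ W hW hWs hy hv
  have hmE : MeasurableSet {t : ℝ | t ∈ Set.Icc (1/2 : ℝ) 1 ∧ y + t • z ∈ W} := by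
    have : Measurable (fun t : ℝ => y + t • z) := by fun_prop
    exact measurableSet_Icc.inter (this hW)
  obtain ⟨K, hKs, hK, hKv⟩ := hmE.exists_lt_isCompact hvol
  have hm0 : (0:ℝ) < m := by exact_mod_cast hm
  set κ : ℝ := γ / (4 ^ (d+1) * m) with hκ
  have hκ0 : 0 < κ := by positivity
  have hκ1 : κ ≤ 1/2 := by
    rw [hκ, div_le_iff₀ (by positivity)]
    have h1 : (4:ℝ) ≤ 4 ^ (d+1) := le_self_pow₀ (by norm_num) (by omega)
    have h2 : (1:ℝ) ≤ m := by exact_mod_cast hm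
    nlinarith
  obtain ⟨p, hp, hsep⟩ := UP_nodes κ hκ0 m K hK (by
    have : (m:ℝ) * κ = γ / 4 ^ (d+1) := by rw [hκ]; field_simp
    rw [this]; exact hKv)
  set X : ℕ → ℝ := fun i => if i = 0 then 0 else p (i-1) with hX
  have hX0 : X 0 = 0 := by simp [hX]
  have hXs : ∀ i, i ≠ 0 → X i = p (i-1) := fun i hi => by simp [hX, hi]
  have hXK : ∀ i, 1 ≤ i → i ≤ m → X i ∈ K := by
    intro i h1 h2; rw [hXs i (by omega)]; exact hp _ (by omega)
  have hXm := hKs (hXK m hm le_rfl)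
  have hline : ContDiff ℝ (⊤ : ℕ∞) (fun s : ℝ => y + s • z) := by fun_prop
  have h := UP_interp m (fun s : ℝ => f (y + s • z)) (hf.comp hline) X κ S ((d * (4 * ρ)) ^ m * B) hκ0 hX0
    (by
      intro i hi
      by_cases h : i = 0
      · rw [h, hX0]; norm_num
      · exact (hKs (hXK i (by omega) hi)).1.2)
    (by
      intro i j hij hj
      by_cases h : i = 0
      · rw [h, hX0]
        have := (hKs (hXK j (by omega) hj)).1.1
        linarith
      · rw [hXs i h, hXs j (by omega)]
        exact hsep _ _ (by omega) (by omega))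
    (by
      intro i h1 h2
      exact hS _ (hKs (hXK i h1 h2)).2)
    (by
      intro t ht
      refine (UP_dir y z t m f hf B ?_).trans ?_
      · intro w hw
        apply hB w hw
        have hconv : Convex ℝ (Metric.ball x ρ) := convex_ball x ρ
        have hend : y + X m • z ∈ Metric.ball x ρ := hWs hXm.2
        have hXpos : 0 < X m := by have := hXm.1.1; linarith
        have hc := hconv.add_smul_sub_mem hy hend (t := t / X m)
          ⟨div_nonneg ht.1 hXpos.le, (div_le_one hXpos).2 ht.2⟩
        have e : y + (t / X m) • (y + X m • z - y) = y + t • z := by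
          rw [add_sub_cancel_left, smul_smul, div_mul_cancel₀ _ hXpos.ne']
        rwa [e] at hc
      · gcongr)
  have hi : κ⁻¹ = 4 ^ (d+1) * m / γ := by rw [hκ, inv_div]
  rw [hi] at h
  simpa using h

lemma UP_fact1 (δ : ℝ) (hδ0 : 0 ≤ δ) (hδ1 : δ ≤ 1) (n m : ℕ) (hm : 1 ≤ m) (hn : n ≤ m)
    (hn' : (n:ℝ) ≤ δ * m + 1) :
    (n.factorial : ℝ) ≤ Real.exp (2 * m) * (m.factorial : ℝ) ^ δ := by
  have hm1 : (1:ℝ) ≤ m := by exact_mod_cast hm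
  have h1 : (n.factorial : ℝ) ≤ (m:ℝ) ^ n := by
    have : n.factorial ≤ n ^ n := Nat.factorial_le_pow n
    calc (n.factorial : ℝ) ≤ (n:ℝ)^n := by exact_mod_cast this
      _ ≤ _ := by gcongr
  have h2 : (m:ℝ) ^ m ≤ Real.exp m * m.factorial := by
    have := Real.pow_div_factorial_le_exp (m:ℝ) (by positivity) m
    rwa [div_le_iff₀ (by positivity)] at this
  have h3 : (m:ℝ) ≤ Real.exp m := by have := Real.add_one_le_exp (m:ℝ); linarith
  calc (n.factorial : ℝ) ≤ (m:ℝ) ^ n := h1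
    _ = (m:ℝ) ^ (n:ℝ) := (Real.rpow_natCast _ _).symm
    _ ≤ (m:ℝ) ^ (δ * m + 1) := Real.rpow_le_rpow_of_exponent_le hm1 hn'
    _ = ((m:ℝ) ^ m) ^ δ * m := by
        rw [Real.rpow_add (by linarith), Real.rpow_one, mul_comm δ, Real.rpow_mul (by linarith),
          Real.rpow_natCast]
    _ ≤ (Real.exp m * m.factorial) ^ δ * Real.exp m := by gcongr
    _ = Real.exp m ^ δ * (m.factorial : ℝ) ^ δ * Real.exp m := by
        rw [Real.mul_rpow (by positivity) (by positivity)]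
    _ ≤ Real.exp m * (m.factorial : ℝ) ^ δ * Real.exp m := by
        gcongr
        calc Real.exp m ^ δ ≤ Real.exp m ^ (1:ℝ) :=
              Real.rpow_le_rpow_of_exponent_le (Real.one_le_exp (by linarith)) hδ1
          _ = _ := Real.rpow_one _
    _ = _ := by rw [two_mul, Real.exp_add]; ring

lemma UP_fact2 (d k m : ℕ) (hm : 1 ≤ m) (hd : d ≤ m) (hk : k ≤ d) :
    (((k + m).factorial : ℕ) : ℝ) ≤ (4 * d.factorial) ^ m * m.factorial := by
  have h1 : (k+m).factorial ≤ (d+m).factorial := Nat.factorial_le (by omega)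
  have h2 := Nat.add_choose_mul_factorial_mul_factorial d m
  have h3 : (d+m).choose m ≤ 4 ^ m := by
    refine (Nat.choose_le_two_pow _ _).trans ?_
    calc 2 ^ (d+m) ≤ 2 ^ (2*m) := Nat.pow_le_pow_right (by norm_num) (by omega)
      _ = 4 ^ m := by rw [pow_mul]; norm_num
  have h4 : d.factorial ≤ d.factorial ^ m := Nat.le_self_pow (by omega) _
  have h5 : (k+m).factorial ≤ (4 * d.factorial) ^ m * m.factorial := by
    refine h1.trans ?_
    rw [← h2, mul_pow]
    gcongr
  exact_mod_cast h5

lemma UP_alg (P Q E F D₁ D3 G H : ℝ) (R : ℝ) (m : ℕ) :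
    (R * P) ^ m * (Q ^ m * (D₁ * D3 ^ m * (E ^ m * G) * (F ^ m * H))) =
      D₁ * (R * P * Q * E * F * D3) ^ m * (G * H) := by
  simp only [mul_pow]
  ring

set_option maxHeartbeats 1000000 in
lemma UP_err (d : ℕ) (ν μ δ R η r₀ : ℝ)
    (hν : 0 ≤ ν) (hμ0 : 0 ≤ μ) (hμ1 : μ < 1)
    (hδ0 : 0 ≤ δ) (hδ1 : δ ≤ 1)
    (hR : 1 ≤ R) (hη1 : η < 1) :
    ∃ A : ℝ, 1 ≤ A ∧
      ∀ (f : EuclideanSpace ℝ (Fin d) → ℝ) (D₁ D₂ : ℝ),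
        0 < D₁ → 1 ≤ D₂ → ContDiff ℝ (⊤ : ℕ∞) f →
        (∀ (n : ℕ) (β : Fin d → ℕ),
          eLpNorm (fun x => (1 + ‖x‖ ^ 2) ^ ((n : ℝ) / 2) * mderiv β f x) 2 volume ≤
            ENNReal.ofReal (D₁ * D₂ ^ (n + ∑ i, β i) *
              (n.factorial : ℝ) ^ ν * (((∑ i, β i).factorial : ℝ)) ^ μ)) →
        ∀ (x : EuclideanSpace ℝ (Fin d)) (ρ : ℝ), 0 < ρ →
          (ρ ≤ R * (1 + ‖x‖ ^ 2) ^ (δ / 2)) →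
          (r₀ ≤ ‖x‖ → ρ ≤ η * ‖x‖) →
        ∀ m : ℕ, 1 ≤ m → d ≤ m → ∀ w : List (Fin d), w.length = m →
        ∀ z ∈ Metric.ball x ρ,
          ρ ^ m * |UP_DW w f z| ≤ D₁ * (A * D₂ ^ 3) ^ m * (m.factorial : ℝ) ^ (δ * ν + μ) := by
  obtain ⟨CS, hCS, hsob⟩ := UP_sobolev d
  set C3 : ℝ := 1 + r₀ ^ 2 + 1 / (1 - η) ^ 2 with hC3
  have hC31 : 1 ≤ C3 := by
    have : 0 ≤ r₀^2 := by positivity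
    have : 0 ≤ 1 / (1-η)^2 := by positivity
    linarith
  have hfd : (1:ℝ) ≤ d.factorial := by exact_mod_cast d.factorial_pos
  refine ⟨R * C3 * CS ^ 2 * Real.exp (2 * ν) * (4 * d.factorial), ?_, ?_⟩
  · have h1 : 1 ≤ CS ^ 2 := one_le_pow₀ hCS
    have h2 : 1 ≤ Real.exp (2 * ν) := Real.one_le_exp (by linarith)
    have h3 : (1:ℝ) ≤ 4 * d.factorial := by linarith
    exact one_le_mul_of_one_le_of_one_le (one_le_mul_of_one_le_of_one_le
      (one_le_mul_of_one_le_of_one_le (one_le_mul_of_one_le_of_one_le hR hC31) h1) h2) h3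
  intro f D₁ D₂ hD1 hD2 hf hyp x ρ hρ hρ1 hρ2 m hm hdm w hw z hz
  have hm1 : (1:ℝ) ≤ m := by exact_mod_cast hm
  set n := ⌈δ * m⌉₊ with hn
  have hnm : n ≤ m := by
    rw [hn, Nat.ceil_le]; nlinarith
  have hn1 : (n:ℝ) ≤ δ * m + 1 := (Nat.ceil_lt_add_one (by positivity)).le
  have hn2 : δ * m ≤ n := Nat.le_ceil _
  have hfm : (1:ℝ) ≤ m.factorial := by exact_mod_cast m.factorial_pos
  set M : ℝ := D₁ * (D₂ ^ 3) ^ m * (Real.exp (2*ν) ^ m * (m.factorial:ℝ) ^ (δ * ν)) *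
    ((4 * d.factorial) ^ m * (m.factorial:ℝ) ^ μ) with hM
  have hM0 : 0 ≤ M := by positivity
  have hs := hsob (UP_DW w f) (UP_DW_smooth w hf) n M hM0 (by
    intro u hu
    have e : UP_DW u (UP_DW w f) = mderiv (fun i => (u ++ w).count i) f := by
      rw [← UP_DW_append, UP_DW_eq_mderiv _ hf]
    rw [e]
    refine (hyp n _).trans ?_
    apply ENNReal.ofReal_le_ofReal
    rw [UP_sum_count, List.length_append, hw]
    have a1 : D₂ ^ (n + (u.length + m)) ≤ (D₂ ^ 3) ^ m := by
      rw [← pow_mul]; exact pow_le_pow_right₀ hD2 (by omega)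
    have a2 : (n.factorial : ℝ) ^ ν ≤ Real.exp (2*ν) ^ m * (m.factorial:ℝ) ^ (δ * ν) := by
      calc (n.factorial : ℝ) ^ ν ≤ (Real.exp (2 * m) * (m.factorial : ℝ) ^ δ) ^ ν := by
            gcongr; exact UP_fact1 δ hδ0 hδ1 n m hm hnm hn1
        _ = _ := by
            rw [Real.mul_rpow (by positivity) (by positivity), ← Real.rpow_mul (by positivity),
              ← Real.exp_mul, ← Real.exp_nat_mul]
            congr 2; ring
    have a3 : (((u.length + m).factorial : ℕ) : ℝ) ^ μ ≤
        (4 * d.factorial) ^ m * (m.factorial:ℝ) ^ μ := by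
      calc (((u.length + m).factorial : ℕ) : ℝ) ^ μ ≤ ((4 * d.factorial) ^ m * m.factorial) ^ μ := by
            gcongr; exact UP_fact2 d _ m hm hdm hu
        _ = ((4 * d.factorial : ℝ) ^ m) ^ μ * (m.factorial:ℝ) ^ μ :=
            Real.mul_rpow (by positivity) (by positivity)
        _ ≤ _ := by
            gcongr
            calc ((4 * d.factorial : ℝ) ^ m) ^ μ ≤ ((4 * d.factorial : ℝ) ^ m) ^ (1:ℝ) := by
                  apply Real.rpow_le_rpow_of_exponent_le _ hμ1.le
                  exact one_le_pow₀ (by linarith)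
              _ = _ := Real.rpow_one _
    simp only [hM]
    gcongr) z
  have hxz : 1 + ‖x‖^2 ≤ C3 * (1 + ‖z‖^2) := by
    have hz2 : 0 ≤ ‖z‖^2 := by positivity
    by_cases h : r₀ ≤ ‖x‖
    · have h1 := hρ2 h
      rw [mem_ball_iff_norm] at hz
      have h2 : ‖x‖ ≤ ‖z‖ + ‖z - x‖ := by
        have := norm_sub_le z (z - x); simpa using this
      have h3 : (1-η) * ‖x‖ ≤ ‖z‖ := by linarith
      have h4 : ‖x‖^2 ≤ 1 / (1-η)^2 * ‖z‖^2 := by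
        have h5 : 0 < 1 - η := by linarith
        have h6 : ((1-η) * ‖x‖)^2 ≤ ‖z‖^2 := by gcongr
        rw [div_mul_eq_mul_div, one_mul, le_div_iff₀ (by positivity)]
        nlinarith
      have h7 : 0 ≤ r₀^2 := by positivity
      have h8 : 0 ≤ 1 / (1-η)^2 := by positivity
      simp only [hC3]
      nlinarith [mul_nonneg h7 hz2]
    · push Not at h
      have h1 : ‖x‖^2 ≤ r₀^2 := by have := norm_nonneg x; nlinarith
      have h8 : 0 ≤ 1 / (1-η)^2 := by positivity
      have h9 : 0 ≤ r₀^2 := by positivity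
      simp only [hC3]
      nlinarith [mul_nonneg h8 hz2, mul_nonneg h9 hz2]
  set V : ℝ := (1 + ‖z‖^2) ^ ((n:ℝ)/2) with hV
  have hz1 : 1 ≤ 1 + ‖z‖^2 := by have : 0 ≤ ‖z‖^2 := by positivity
                                 linarith
  have hρm : ρ ^ m ≤ (R * C3) ^ m * V := by
    have b1 : ρ ≤ R * C3 * (1 + ‖z‖^2) ^ (δ/2) := by
      calc ρ ≤ R * (1 + ‖x‖^2) ^ (δ/2) := hρ1
        _ ≤ R * (C3 * (1 + ‖z‖^2)) ^ (δ/2) := by gcongr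
        _ = R * (C3 ^ (δ/2) * (1 + ‖z‖^2) ^ (δ/2)) := by
            rw [Real.mul_rpow (by linarith) (by positivity)]
        _ ≤ R * (C3 * (1 + ‖z‖^2) ^ (δ/2)) := by
            gcongr
            calc C3 ^ (δ/2) ≤ C3 ^ (1:ℝ) := Real.rpow_le_rpow_of_exponent_le hC31 (by linarith)
              _ = C3 := Real.rpow_one _
        _ = _ := by ring
    calc ρ ^ m ≤ (R * C3 * (1 + ‖z‖^2) ^ (δ/2)) ^ m := by gcongr
      _ = (R * C3) ^ m * (1 + ‖z‖^2) ^ (δ/2 * m) := by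
          rw [mul_pow, Real.rpow_mul (by positivity), Real.rpow_natCast]
      _ ≤ _ := by
          gcongr
          exact Real.rpow_le_rpow_of_exponent_le hz1 (by linarith)
  have hcs : CS ^ (n+1) ≤ (CS^2)^m := by
    rw [← pow_mul]; exact pow_le_pow_right₀ hCS (by omega)
  calc ρ ^ m * |UP_DW w f z| ≤ ((R * C3) ^ m * V) * |UP_DW w f z| := by gcongr
    _ = (R * C3)^m * (V * |UP_DW w f z|) := by ring
    _ ≤ (R * C3)^m * ((CS^2)^m * M) := by
        exact mul_le_mul_of_nonneg_left
          (hs.trans (mul_le_mul_of_nonneg_right hcs hM0)) (by positivity)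
    _ = _ := by
        rw [Real.rpow_add (by linarith), hM]
        exact UP_alg _ _ _ _ _ _ _ _ _ _


lemma UP_markov {d : ℕ} (f : EuclideanSpace ℝ (Fin d) → ℝ) (hf : Continuous f)
    (U : Set (EuclideanSpace ℝ (Fin d))) (hU : MeasurableSet U) (I v : ℝ) (hI : 0 ≤ I)
    (hv : 0 < v) (hIe : ∫⁻ y in U, ENNReal.ofReal (f y ^ 2) = ENNReal.ofReal I)
    (hve : volume U = ENNReal.ofReal v) :
    ENNReal.ofReal (v / 2) ≤ volume (U ∩ {z | f z ^ 2 ≤ 2 * I / v}) := by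
  have hmeas : MeasurableSet {z | f z ^ 2 ≤ 2 * I / v} :=
    (isClosed_le (by fun_prop) (by fun_prop)).measurableSet
  have hbad : volume (U ∩ {z | f z ^ 2 ≤ 2 * I / v}ᶜ) ≤ ENNReal.ofReal (v / 2) := by
    rcases hI.eq_or_lt with h0 | h0
    · rw [← h0] at hIe ⊢
      rw [ENNReal.ofReal_zero, lintegral_eq_zero_iff (by fun_prop)] at hIe
      have : volume (U ∩ {z | f z ^ 2 ≤ 2 * 0 / v}ᶜ) = 0 := by
        rw [Filter.EventuallyEq, ae_restrict_iff' hU] at hIe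
        refine measure_mono_null ?_ hIe
        rintro z ⟨hz, hz2⟩ hc
        have h1 := hc hz
        simp only [Pi.zero_apply, ENNReal.ofReal_eq_zero] at h1
        simp at hz2 h1
        simp [h1] at hz2
      rw [this]; simp
    · have h1 := mul_meas_ge_le_lintegral₀ (μ := volume.restrict U)
        (f := fun y => ENNReal.ofReal (f y ^ 2)) (by fun_prop) (ENNReal.ofReal (2 * I / v))
      rw [hIe, Measure.restrict_apply' hU] at h1
      have h2 : volume (U ∩ {z | f z ^ 2 ≤ 2 * I / v}ᶜ) ≤
          volume ({x | ENNReal.ofReal (2 * I / v) ≤ ENNReal.ofReal (f x ^ 2)} ∩ U) := by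
        apply measure_mono
        rintro z ⟨hz, hz2⟩
        refine ⟨?_, hz⟩
        simp only [Set.mem_compl_iff, Set.mem_ofPred_eq, not_le] at hz2
        exact ENNReal.ofReal_le_ofReal hz2.le
      have h3 : ENNReal.ofReal I = ENNReal.ofReal (2 * I / v) * ENNReal.ofReal (v / 2) := by
        rw [← ENNReal.ofReal_mul (by positivity)]; congr 1; field_simp
      rw [h3] at h1
      refine h2.trans ?_
      exact (ENNReal.mul_le_mul_iff_right (by simp; positivity) (by simp)).1 h1
  have h4 := measure_inter_add_sdiff U hmeas (μ := volume)
  rw [Set.sdiff_eq, hve] at h4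
  have h5 : ENNReal.ofReal v = ENNReal.ofReal (v/2) + ENNReal.ofReal (v/2) := by
    rw [← ENNReal.ofReal_add (by positivity) (by positivity)]; congr 1; ring
  have h6 : ENNReal.ofReal (v/2) + ENNReal.ofReal (v/2) ≤
      volume (U ∩ {z | f z ^ 2 ≤ 2 * I / v}) + ENNReal.ofReal (v/2) := by
    rw [← h5, ← h4]; gcongr
  exact (ENNReal.add_le_add_iff_right (by simp)).1 h6

lemma UP_ball {d : ℕ} (f : EuclideanSpace ℝ (Fin d) → ℝ) (hf : ContDiff ℝ (⊤ : ℕ∞) f)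
    (x : EuclideanSpace ℝ (Fin d)) (ρ γ Bd : ℝ) (hρ : 0 < ρ) (hγ : 0 < γ) (hγ1 : γ ≤ 1)
    (ω : Set (EuclideanSpace ℝ (Fin d))) (hω : MeasurableSet ω)
    (hv : ENNReal.ofReal γ * volume (Metric.ball x ρ) ≤ volume (Metric.ball x ρ ∩ ω))
    (m : ℕ) (hm : 1 ≤ m) (hB0 : 0 ≤ Bd)
    (hB : ∀ w : List (Fin d), w.length = m → ∀ z ∈ Metric.ball x ρ,
      ρ ^ m * |UP_DW w f z| ≤ Bd) :
    ∫⁻ y in Metric.ball x ρ, ENNReal.ofReal (f y ^ 2) ≤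
      ENNReal.ofReal (4 * (m * (4 ^ (d+1) * m / (γ/2)) ^ m) ^ 2 / γ) *
        (∫⁻ y in Metric.ball x ρ ∩ ω, ENNReal.ofReal (f y ^ 2)) +
      ENNReal.ofReal (2 * ((4 * d) ^ m * Bd / m.factorial) ^ 2) * volume (Metric.ball x ρ) := by
  have hUm : MeasurableSet (Metric.ball x ρ ∩ ω) := measurableSet_ball.inter hω
  have hfc : Continuous f := hf.continuous
  set b := (volume (Metric.ball x ρ)).toReal with hb
  have hbe : volume (Metric.ball x ρ) = ENNReal.ofReal b :=
    (ENNReal.ofReal_toReal measure_ball_lt_top.ne).symm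
  have hb0 : 0 < b := ENNReal.toReal_pos (Metric.measure_ball_pos _ _ hρ).ne'
    measure_ball_lt_top.ne
  have hUf : volume (Metric.ball x ρ ∩ ω) ≠ ⊤ :=
    ((measure_mono Set.inter_subset_left).trans_lt measure_ball_lt_top).ne
  set v := (volume (Metric.ball x ρ ∩ ω)).toReal with hvd
  have hve : volume (Metric.ball x ρ ∩ ω) = ENNReal.ofReal v :=
    (ENNReal.ofReal_toReal hUf).symm
  have hvb : γ * b ≤ v := by
    rw [hbe, hve, ← ENNReal.ofReal_mul hγ.le] at hv
    exact (ENNReal.ofReal_le_ofReal_iff (by positivity)).1 hv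
  have hv0 : 0 < v := lt_of_lt_of_le (by positivity) hvb
  have hIf : ∫⁻ y in Metric.ball x ρ ∩ ω, ENNReal.ofReal (f y ^ 2) ≠ ⊤ := by
    have h1 : IntegrableOn (fun y => f y ^ 2) (Metric.ball x ρ ∩ ω) := by
      refine IntegrableOn.mono_set (t := Metric.closedBall x ρ) ?_
        (Set.inter_subset_left.trans Metric.ball_subset_closedBall)
      exact (by fun_prop : Continuous fun y => f y ^ 2).continuousOn.integrableOn_compact
        (isCompact_closedBall x ρ)
    have h2 := h1.lintegral_lt_top
    exact h2.ne
  set I := (∫⁻ y in Metric.ball x ρ ∩ ω, ENNReal.ofReal (f y ^ 2)).toReal with hI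
  have hIe : ∫⁻ y in Metric.ball x ρ ∩ ω, ENNReal.ofReal (f y ^ 2) = ENNReal.ofReal I :=
    (ENNReal.ofReal_toReal hIf).symm
  have hI0 : 0 ≤ I := ENNReal.toReal_nonneg
  have hmk := UP_markov f hfc _ hUm I v hI0 hv0 hIe hve
  have hloc := UP_local f hf x ρ (γ/2) (Real.sqrt (2 * I / v)) (Bd / ρ ^ m) hρ (by linarith)
    (by linarith) (Metric.ball x ρ ∩ ω ∩ {z | f z ^ 2 ≤ 2 * I / v})
    (hUm.inter (isClosed_le (by fun_prop) (by fun_prop)).measurableSet)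
    (fun z hz => hz.1.1) (by
      refine le_trans ?_ hmk
      rw [hbe, ← ENNReal.ofReal_mul (by linarith)]
      apply ENNReal.ofReal_le_ofReal
      linarith) (fun z hz => Real.abs_le_sqrt hz.2) m hm (by positivity)
    (fun w hw z hz => by
      rw [le_div_iff₀ (by positivity), mul_comm]; exact hB w hw z hz)
  set N : ℝ := m * (4 ^ (d+1) * m / (γ/2)) ^ m with hN
  have hQ : (d * (4 * ρ)) ^ m * (Bd / ρ ^ m) / m.factorial = (4 * d) ^ m * Bd / m.factorial := by
    have : (d * (4 * ρ)) ^ m = (4 * d) ^ m * ρ ^ m := by rw [← mul_pow]; ring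
    rw [this]; field_simp
  rw [hQ] at hloc
  set Q : ℝ := (4 * d) ^ m * Bd / m.factorial with hQd
  have hpt : ∀ y ∈ Metric.ball x ρ, f y ^ 2 ≤ 2 * Q ^ 2 + 4 * N ^ 2 * I / v := by
    intro y hy
    have h1 := hloc y hy
    have h2 : f y ^ 2 ≤ (Q + N * Real.sqrt (2 * I / v)) ^ 2 := by
      rw [← sq_abs]; gcongr
    have h3 : Real.sqrt (2 * I / v) ^ 2 = 2 * I / v := Real.sq_sqrt (by positivity)
    have h4 : 4 * N ^ 2 * I / v = 2 * (N * Real.sqrt (2 * I / v)) ^ 2 := by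
      rw [mul_pow N, h3]; ring
    rw [h4]
    nlinarith [sq_nonneg (Q - N * Real.sqrt (2 * I / v))]
  calc ∫⁻ y in Metric.ball x ρ, ENNReal.ofReal (f y ^ 2)
      ≤ ∫⁻ y in Metric.ball x ρ, ENNReal.ofReal (2 * Q ^ 2 + 4 * N ^ 2 * I / v) :=
        setLIntegral_mono measurable_const (fun y hy => ENNReal.ofReal_le_ofReal (hpt y hy))
    _ = ENNReal.ofReal ((2 * Q ^ 2 + 4 * N ^ 2 * I / v) * b) := by
        rw [setLIntegral_const, hbe, ENNReal.ofReal_mul (by positivity)]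
    _ ≤ ENNReal.ofReal (4 * N ^ 2 / γ * I + 2 * Q ^ 2 * b) := by
        apply ENNReal.ofReal_le_ofReal
        have h1 : b / v ≤ 1 / γ := by
          rw [div_le_div_iff₀ hv0 hγ]; linarith
        have h2 : 4 * N ^ 2 * I * (b / v) ≤ 4 * N ^ 2 * I * (1 / γ) := by gcongr
        have e1 : (2 * Q ^ 2 + 4 * N ^ 2 * I / v) * b = 4 * N ^ 2 * I * (b / v) + 2 * Q ^ 2 * b := by
          ring
        have e2 : 4 * N ^ 2 / γ * I = 4 * N ^ 2 * I * (1 / γ) := by ring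
        linarith
    _ = _ := by
        rw [ENNReal.ofReal_add (by positivity) (by positivity), ENNReal.ofReal_mul (by positivity),
          ENNReal.ofReal_mul (by positivity), hIe, hbe]

set_option maxHeartbeats 1000000 in
lemma UP_cover (d : ℕ) (g : EuclideanSpace ℝ (Fin d) → ENNReal)
    (ω : Set (EuclideanSpace ℝ (Fin d))) (hω : MeasurableSet ω)
    (ρ : EuclideanSpace ℝ (Fin d) → ℝ) (hρ : ∀ x, 0 < ρ x) (r rb : ℝ)
    (hrb : ∀ x : EuclideanSpace ℝ (Fin d), ‖x‖ ≤ r → ρ x ≤ rb) (P Q : ENNReal)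
    (h : ∀ x : EuclideanSpace ℝ (Fin d), ‖x‖ ≤ r → ∫⁻ y in Metric.ball x (ρ x), g y ≤
      P * (∫⁻ y in Metric.ball x (ρ x) ∩ ω, g y) + Q * volume (Metric.ball x (ρ x))) :
    ∫⁻ y in {y : EuclideanSpace ℝ (Fin d) | ‖y‖ ≤ r}, g y ≤
      (Besicovitch.multiplicity (EuclideanSpace ℝ (Fin d)) : ENNReal) *
        (P * (∫⁻ y in ω, g y) + Q * volume (Metric.ball (0 : EuclideanSpace ℝ (Fin d)) (r + rb))) := by
  let q : Besicovitch.BallPackage {x : EuclideanSpace ℝ (Fin d) // ‖x‖ ≤ r}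
      (EuclideanSpace ℝ (Fin d)) :=
    { c := fun x => x.1
      r := fun x => ρ x.1
      rpos := fun x => hρ x.1
      r_bound := rb
      r_le := fun x => hrb x.1 x.2 }
  obtain ⟨s, hs1, hs2⟩ := Besicovitch.exist_disjoint_covering_families
    (Besicovitch.one_lt_goodτ (EuclideanSpace ℝ (Fin d)))
    (Besicovitch.isEmpty_satelliteConfig_multiplicity (EuclideanSpace ℝ (Fin d))) q
  have hdisj : ∀ i, (s i).PairwiseDisjoint fun j => Metric.ball j.1 (ρ j.1) := by
    intro i j hj k hk hjk
    exact (hs1 i hj hk hjk).mono Metric.ball_subset_closedBall Metric.ball_subset_closedBall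
  have hdisj2 : ∀ i, (s i).PairwiseDisjoint fun j => Metric.ball j.1 (ρ j.1) ∩ ω := by
    intro i j hj k hk hjk
    have := hdisj i hj hk hjk
    exact Disjoint.mono (Set.inter_subset_left) (Set.inter_subset_left) this
  have hcount : ∀ i, (s i).Countable := by
    intro i
    apply (hdisj i).countable_of_isOpen (fun j _ => Metric.isOpen_ball)
    intro j _
    exact ⟨j.1, Metric.mem_ball_self (hρ _)⟩
  have hsub : {y : EuclideanSpace ℝ (Fin d) | ‖y‖ ≤ r} ⊆
      ⋃ i, ⋃ j ∈ s i, Metric.ball j.1 (ρ j.1) := by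
    intro y hy
    exact hs2 ⟨⟨y, hy⟩, rfl⟩
  have key : ∀ i, ∫⁻ y in ⋃ j ∈ s i, Metric.ball j.1 (ρ j.1), g y ≤
      P * (∫⁻ y in ω, g y) + Q * volume (Metric.ball (0 : EuclideanSpace ℝ (Fin d)) (r + rb)) := by
    intro i
    have : Countable (s i) := (hcount i).to_subtype
    have hm2 : ∀ j ∈ s i, MeasurableSet (Metric.ball j.1 (ρ j.1) ∩ ω) :=
      fun j _ => measurableSet_ball.inter hω
    have hU2 : ∫⁻ y in ⋃ j ∈ s i, Metric.ball j.1 (ρ j.1) ∩ ω, g y =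
        ∑' j : s i, ∫⁻ y in Metric.ball j.1.1 (ρ j.1.1) ∩ ω, g y :=
      lintegral_biUnion (hcount i) hm2 (hdisj2 i) g
    rw [lintegral_biUnion (hcount i) (fun j _ => measurableSet_ball) (hdisj i)]
    calc ∑' j : s i, ∫⁻ y in Metric.ball j.1.1 (ρ j.1.1), g y
        ≤ ∑' j : s i, (P * (∫⁻ y in Metric.ball j.1.1 (ρ j.1.1) ∩ ω, g y) +
            Q * volume (Metric.ball j.1.1 (ρ j.1.1))) :=
          ENNReal.tsum_le_tsum (fun j => h j.1.1 j.1.2)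
      _ = P * (∑' j : s i, ∫⁻ y in Metric.ball j.1.1 (ρ j.1.1) ∩ ω, g y) +
            Q * ∑' j : s i, volume (Metric.ball j.1.1 (ρ j.1.1)) := by
          rw [ENNReal.tsum_add, ENNReal.tsum_mul_left, ENNReal.tsum_mul_left]
      _ ≤ _ := by
          gcongr
          · rw [← hU2]
            apply lintegral_mono_set
            simp only [Set.iUnion_subset_iff]
            intro j _ y hy
            exact hy.2
          · rw [← measure_biUnion (hcount i) (hdisj i) (fun j _ => measurableSet_ball)]
            apply measure_mono
            simp only [Set.iUnion_subset_iff]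
            intro j _ y hy
            rw [mem_ball_iff_norm] at hy
            rw [mem_ball_zero_iff]
            have h1 : ‖y‖ ≤ ‖y - j.1‖ + ‖j.1‖ := by
              have := norm_add_le (y - j.1) j.1; simpa using this
            have h2 := hrb j.1 j.2
            have h3 := j.2
            linarith
  calc ∫⁻ y in {y : EuclideanSpace ℝ (Fin d) | ‖y‖ ≤ r}, g y
      ≤ ∫⁻ y in ⋃ i, ⋃ j ∈ s i, Metric.ball j.1 (ρ j.1), g y := lintegral_mono_set hsub
    _ ≤ ∑' i, ∫⁻ y in ⋃ j ∈ s i, Metric.ball j.1 (ρ j.1), g y := lintegral_iUnion_le _ _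
    _ ≤ ∑' _ : Fin (Besicovitch.multiplicity (EuclideanSpace ℝ (Fin d))),
        (P * (∫⁻ y in ω, g y) +
          Q * volume (Metric.ball (0 : EuclideanSpace ℝ (Fin d)) (r + rb))) :=
        ENNReal.tsum_le_tsum key
    _ = _ := by
        rw [tsum_fintype, Finset.sum_const, Finset.card_univ, Fintype.card_fin, nsmul_eq_mul]

lemma UP_mderiv_zero {d : ℕ} (f : EuclideanSpace ℝ (Fin d) → ℝ) : mderiv (fun _ => 0) f = f := by
  unfold mderiv
  induction (List.finRange d) with
  | nil => rfl
  | cons a l ih => simp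

lemma UP_eLp {d : ℕ} (f : EuclideanSpace ℝ (Fin d) → ℝ) (κ : Measure (EuclideanSpace ℝ (Fin d))) :
    eLpNorm f 2 κ ^ 2 = ∫⁻ y, ENNReal.ofReal (f y ^ 2) ∂κ := by
  have h := eLpNorm_nnreal_pow_eq_lintegral (f := f) (μ := κ) (p := 2) (by norm_num)
  simp only [NNReal.coe_ofNat, ENNReal.coe_ofNat] at h
  rw [← ENNReal.rpow_natCast, Nat.cast_ofNat, h]
  apply lintegral_congr
  intro y
  rw [Real.enorm_eq_ofReal_abs, ENNReal.ofReal_rpow_of_nonneg (abs_nonneg _) (by norm_num)]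
  congr 1
  rw [Real.rpow_ofNat, sq_abs]

lemma UP_tail {d : ℕ} (f : EuclideanSpace ℝ (Fin d) → ℝ) (M r : ℝ) (hM : 0 ≤ M) (hr : 0 < r)
    (h : eLpNorm (fun x => (1 + ‖x‖ ^ 2) ^ ((1 : ℝ) / 2) * f x) 2 volume ≤ ENNReal.ofReal M) :
    ∫⁻ y in {y : EuclideanSpace ℝ (Fin d) | ‖y‖ ≤ r}ᶜ, ENNReal.ofReal (f y ^ 2) ≤
      ENNReal.ofReal (M ^ 2 / r ^ 2) := by
  have h1 : eLpNorm (fun x => (1 + ‖x‖ ^ 2) ^ ((1 : ℝ) / 2) * f x) 2 volume ^ 2 ≤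
      ENNReal.ofReal (M ^ 2) := by
    rw [ENNReal.ofReal_pow hM]; gcongr
  rw [UP_eLp] at h1
  have hms : MeasurableSet {y : EuclideanSpace ℝ (Fin d) | ‖y‖ ≤ r} :=
    (isClosed_le (by fun_prop) (by fun_prop)).measurableSet
  calc ∫⁻ y in {y : EuclideanSpace ℝ (Fin d) | ‖y‖ ≤ r}ᶜ, ENNReal.ofReal (f y ^ 2)
      ≤ ∫⁻ y in {y : EuclideanSpace ℝ (Fin d) | ‖y‖ ≤ r}ᶜ, ENNReal.ofReal (1 / r ^ 2) *
          ENNReal.ofReal (((1 + ‖y‖ ^ 2) ^ ((1 : ℝ) / 2) * f y) ^ 2) := by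
        apply setLIntegral_mono' hms.compl
        intro y hy
        simp only [Set.mem_compl_iff, Set.mem_ofPred_eq, not_le] at hy
        rw [← ENNReal.ofReal_mul (by positivity)]
        apply ENNReal.ofReal_le_ofReal
        rw [mul_pow, ← Real.rpow_natCast ((1 + ‖y‖ ^ 2) ^ ((1 : ℝ) / 2)), ← Real.rpow_mul (by positivity)]
        norm_num
        rw [← div_eq_inv_mul, le_div_iff₀ (by positivity)]
        have : r ^ 2 ≤ 1 + ‖y‖ ^ 2 := by nlinarith
        nlinarith [sq_nonneg (f y)]
    _ ≤ ∫⁻ y, ENNReal.ofReal (1 / r ^ 2) *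
          ENNReal.ofReal (((1 + ‖y‖ ^ 2) ^ ((1 : ℝ) / 2) * f y) ^ 2) := setLIntegral_le_lintegral _ _
    _ = ENNReal.ofReal (1 / r ^ 2) *
          ∫⁻ y, ENNReal.ofReal (((1 + ‖y‖ ^ 2) ^ ((1 : ℝ) / 2) * f y) ^ 2) :=
        lintegral_const_mul' _ _ ENNReal.ofReal_ne_top
    _ ≤ ENNReal.ofReal (1 / r ^ 2) * ENNReal.ofReal (M ^ 2) := by gcongr
    _ = _ := by
        rw [← ENNReal.ofReal_mul (by positivity)]; congr 1; ring

lemma UP_Q (d m : ℕ) (hd : 1 ≤ d) (A D₁ D₂ s q : ℝ) (hA : 1 ≤ A) (hD1 : 0 < D₁) (hD2 : 1 ≤ D₂)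
    (hs : s < 1)
    (hm : Real.exp 1 * (4 * d * A * Real.exp q) ^ (1 / (1 - s)) * D₂ ^ ((4:ℝ) / (1 - s)) ≤ m) :
    (4 * (d:ℝ)) ^ m * (D₁ * (A * D₂ ^ 3) ^ m * (m.factorial : ℝ) ^ s) / m.factorial ≤
      D₁ * Real.exp (- q * m) := by
  have hd1 : (1:ℝ) ≤ d := by exact_mod_cast hd
  have hs1 : 0 < 1 - s := by linarith
  have hf0 : (0:ℝ) < m.factorial := by exact_mod_cast m.factorial_pos
  set Z : ℝ := 4 * d * A * Real.exp q with hZ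
  have hZ0 : 0 < Z := by positivity
  have h2 : ((m:ℝ) / Real.exp 1) ^ m ≤ m.factorial := by
    have := Real.pow_div_factorial_le_exp (m:ℝ) (by positivity) m
    rw [div_le_iff₀ (by positivity)] at this
    rw [div_pow, div_le_iff₀ (by positivity), ← Real.exp_nat_mul, mul_one]
    linarith
  have h3 : Z * D₂ ^ 3 ≤ ((m:ℝ) / Real.exp 1) ^ (1 - s) := by
    have e1 : Z ^ (1 / (1 - s)) * D₂ ^ ((4:ℝ) / (1 - s)) ≤ (m:ℝ) / Real.exp 1 := by
      rw [le_div_iff₀ (by positivity)]; linarith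
    calc Z * D₂ ^ 3 ≤ Z * D₂ ^ 4 := by gcongr; norm_num
      _ = (Z ^ (1 / (1 - s)) * D₂ ^ ((4:ℝ) / (1 - s))) ^ (1 - s) := by
          rw [Real.mul_rpow (by positivity) (by positivity), ← Real.rpow_mul (by positivity),
            ← Real.rpow_mul (by positivity), div_mul_cancel₀ _ hs1.ne', div_mul_cancel₀ _ hs1.ne',
            Real.rpow_one]
          norm_cast
      _ ≤ _ := by gcongr
  have h4 : (Z * D₂ ^ 3) ^ m ≤ (m.factorial : ℝ) ^ (1 - s) := by
    calc (Z * D₂ ^ 3) ^ m ≤ (((m:ℝ) / Real.exp 1) ^ (1 - s)) ^ m := by gcongr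
      _ = (((m:ℝ) / Real.exp 1) ^ m) ^ (1 - s) := by
          rw [← Real.rpow_natCast, ← Real.rpow_natCast, ← Real.rpow_mul (by positivity),
            ← Real.rpow_mul (by positivity), mul_comm]
      _ ≤ _ := by gcongr
  have h5 : (m.factorial : ℝ) ^ (1 - s) * (m.factorial : ℝ) ^ s = m.factorial := by
    rw [← Real.rpow_add hf0]; simp
  have h6 : Real.exp (- q * m) * Real.exp q ^ m = 1 := by
    rw [← Real.exp_nat_mul, ← Real.exp_add]; simp; ring
  rw [div_le_iff₀ hf0]
  have h7 : (4 * (d:ℝ)) ^ m * (D₁ * (A * D₂ ^ 3) ^ m * (m.factorial : ℝ) ^ s) =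
      D₁ * Real.exp (- q * m) * ((Z * D₂ ^ 3) ^ m * (m.factorial : ℝ) ^ s) := by
    have : (Z * D₂ ^ 3) ^ m = (4 * (d:ℝ)) ^ m * (A * D₂ ^ 3) ^ m * Real.exp q ^ m := by
      rw [← mul_pow, ← mul_pow, hZ]; ring
    rw [this]
    linear_combination (-(D₁ * (4 * (d:ℝ)) ^ m * (A * D₂ ^ 3) ^ m * (m.factorial : ℝ) ^ s)) * h6
  rw [h7]
  calc D₁ * Real.exp (- q * m) * ((Z * D₂ ^ 3) ^ m * (m.factorial : ℝ) ^ s)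
      ≤ D₁ * Real.exp (- q * m) * ((m.factorial : ℝ) ^ (1 - s) * (m.factorial : ℝ) ^ s) := by
        gcongr
    _ = _ := by rw [h5]

lemma UP_N2 (d m : ℕ) (D₁ nb vd R X ε Q q : ℝ) (hnb : 0 ≤ nb) (hvd : 0 ≤ vd) (hR : 1 ≤ R)
    (hX : 1 ≤ X) (hε : Real.exp (-X) ≤ ε) (hmX : X ≤ m)
    (hq : 2 * q = d + 1 + 4 * nb * vd * (3 * R) ^ d) (hQ0 : 0 ≤ Q)
    (hQ : Q ≤ D₁ * Real.exp (- q * m)) :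
    nb * ((2 * Q ^ 2) * ((3 * R * Real.exp X) ^ d * vd)) ≤ ε * D₁ ^ 2 / 2 := by
  set C : ℝ := 4 * nb * vd * (3 * R) ^ d with hC
  have hC0 : 0 ≤ C := by positivity
  have h1 : Q ^ 2 ≤ D₁ ^ 2 * Real.exp (- (d + 1 + C) * X) := by
    calc Q ^ 2 ≤ (D₁ * Real.exp (- q * m)) ^ 2 := by gcongr
      _ = D₁ ^ 2 * Real.exp (- (d + 1 + C) * m) := by
          rw [mul_pow, ← Real.exp_nat_mul, ← hq]; congr 2; push_cast; ring
      _ ≤ _ := by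
          gcongr ?_ * Real.exp ?_
          nlinarith [Nat.cast_nonneg (α := ℝ) d]
  have h2 : Real.exp (- (d + 1 + C) * X) = Real.exp (-X) * Real.exp (- (C * X)) * Real.exp (-(d * X)) := by
    rw [← Real.exp_add, ← Real.exp_add]; congr 1; ring
  have h3 : (3 * R * Real.exp X) ^ d = (3 * R) ^ d * Real.exp (d * X) := by
    rw [mul_pow, ← Real.exp_nat_mul]
  have h4 : Real.exp (-(d * X)) * Real.exp (d * X) = 1 := by rw [← Real.exp_add]; simp
  have h5 : C * Real.exp (-(C * X)) ≤ 1 := by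
    rw [Real.exp_neg, ← div_eq_mul_inv, div_le_one (Real.exp_pos _)]
    have := Real.add_one_le_exp (C * X)
    nlinarith
  calc nb * ((2 * Q ^ 2) * ((3 * R * Real.exp X) ^ d * vd))
      ≤ nb * ((2 * (D₁ ^ 2 * Real.exp (- (d + 1 + C) * X))) * ((3 * R * Real.exp X) ^ d * vd)) := by
        gcongr
    _ = D₁ ^ 2 / 2 * Real.exp (-X) * (C * Real.exp (-(C * X))) *
          (Real.exp (-(d * X)) * Real.exp (d * X)) := by
        rw [h2, h3, hC]; ring
    _ ≤ D₁ ^ 2 / 2 * ε * 1 * 1 := by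
        have hε0 : 0 ≤ ε := (Real.exp_pos _).le.trans hε
        rw [h4]; gcongr
    _ = _ := by ring

lemma UP_N3 (d m : ℕ) (nb γ₀ a X b : ℝ) (hnb : 0 ≤ nb) (hγ : 0 < γ₀) (ha : 0 < a)
    (hX : 1 ≤ X) (hb : 0 ≤ b) (hm : (m:ℝ) ≤ b * X) :
    nb * (4 * (m * (4 ^ (d+1) * m / ((γ₀ / (1 + Real.exp X ^ a)) / 2)) ^ m) ^ 2 /
      (γ₀ / (1 + Real.exp X ^ a))) ≤
      Real.exp ((4 * nb + 2 * b + 2 * b * (2 * 4 ^ (d+1) + b + (a + 1 + 1 / γ₀)) +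
        (a + 1 + 1 / γ₀)) * X ^ 2) := by
  set g : ℝ := a + 1 + 1 / γ₀ with hg
  have hg0 : 0 ≤ g := by positivity
  have e0 : ∀ t : ℝ, t ≤ Real.exp t := fun t => by
    have := Real.add_one_le_exp t; linarith
  have h2e : (2:ℝ) ≤ Real.exp 1 := by have := Real.add_one_le_exp (1:ℝ); linarith
  have hinv : 1 / (γ₀ / (1 + Real.exp X ^ a)) ≤ Real.exp (g * X) := by
    have h1 : Real.exp X ^ a = Real.exp (a * X) := by rw [← Real.exp_mul, mul_comm]
    have h2 : 1 ≤ Real.exp (a * X) := Real.one_le_exp (by positivity)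
    calc 1 / (γ₀ / (1 + Real.exp X ^ a)) = (1 + Real.exp (a * X)) * (1 / γ₀) := by
          rw [h1]; field_simp
      _ ≤ (2 * Real.exp (a * X)) * Real.exp (1 / γ₀) := by
          gcongr
          · linarith
          · exact e0 _
      _ ≤ (Real.exp 1 * Real.exp (a * X)) * Real.exp (1 / γ₀) := by gcongr
      _ = Real.exp (1 + a * X + 1 / γ₀) := by rw [Real.exp_add, Real.exp_add]
      _ ≤ _ := by
          apply Real.exp_le_exp.2
          have : 0 ≤ 1 / γ₀ := by positivity
          rw [hg]; nlinarith
  set γ := γ₀ / (1 + Real.exp X ^ a) with hγd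
  have hγ0 : 0 < γ := by positivity
  set c : ℝ := 2 * 4 ^ (d+1) with hc
  have hc0 : 0 ≤ c := by positivity
  have hN : (m:ℝ) * (4 ^ (d+1) * m / (γ / 2)) ^ m ≤ Real.exp (m + m * (c + m + g * X)) := by
    have h1 : 4 ^ (d+1) * (m:ℝ) / (γ / 2) = c * m * (1 / γ) := by rw [hc]; field_simp
    rw [h1, Real.exp_add, Real.exp_nat_mul, Real.exp_add, Real.exp_add]
    gcongr
    · exact e0 _
    · exact e0 _
    · exact e0 _
  have hm0 : (0:ℝ) ≤ m := by positivity
  calc nb * (4 * (m * (4 ^ (d+1) * m / (γ / 2)) ^ m) ^ 2 / γ)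
      = (4 * nb) * (m * (4 ^ (d+1) * m / (γ / 2)) ^ m) ^ 2 * (1 / γ) := by ring
    _ ≤ Real.exp (4 * nb) * (Real.exp (m + m * (c + m + g * X))) ^ 2 * Real.exp (g * X) := by
        gcongr
        exact e0 _
    _ = Real.exp (4 * nb + 2 * (m + m * (c + m + g * X)) + g * X) := by
        rw [← Real.exp_nat_mul, ← Real.exp_add, ← Real.exp_add]; norm_num
    _ ≤ _ := by
        apply Real.exp_le_exp.2
        have hXX : X ≤ X ^ 2 := by nlinarith
        have k1 : 4 * nb ≤ 4 * nb * X ^ 2 := by nlinarith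
        have k2 : (m:ℝ) ≤ b * X ^ 2 := hm.trans (by gcongr)
        have k3 : (m:ℝ) * (c + m + g * X) ≤ (b * X) * (c * X + b * X + g * X) := by
          gcongr
          nlinarith
        have k4 : g * X ≤ g * X ^ 2 := by gcongr
        nlinarith

set_option maxHeartbeats 2000000

/-- Theorem 2.2 (uncertainty principle with error term, variable density with
polynomial decay). -/
theorem uncertainty_principle_decay
    (d : ℕ) (hd : 1 ≤ d) (ν μ δ R η r₀ γ₀ a : ℝ)
    (hν : 0 ≤ ν) (hμ0 : 0 ≤ μ) (hμ1 : μ < 1)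
    (hδ0 : 0 ≤ δ) (hδ1 : δ ≤ 1) (hs : δ * ν + μ < 1)
    (hR : 1 ≤ R) (hη0 : 0 < η) (hη1 : η < 1) (hr₀ : 1 ≤ r₀)
    (hγ0 : 0 < γ₀) (hγ1 : γ₀ < 1) (ha : 0 < a) :
    ∃ K : ℝ, 1 ≤ K ∧
      ∀ (f : EuclideanSpace ℝ (Fin d) → ℝ) (D₁ D₂ : ℝ),
        0 < D₁ → 1 ≤ D₂ → ContDiff ℝ (⊤ : ℕ∞) f →
        (∀ (n : ℕ) (β : Fin d → ℕ),
          eLpNorm (fun x => (1 + ‖x‖ ^ 2) ^ ((n : ℝ) / 2) * mderiv β f x) 2 volume ≤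
            ENNReal.ofReal (D₁ * D₂ ^ (n + ∑ i, β i) *
              (n.factorial : ℝ) ^ ν * (((∑ i, β i).factorial : ℝ)) ^ μ)) →
        ∀ ρ : EuclideanSpace ℝ (Fin d) → ℝ, Measurable ρ → (∀ x, 0 < ρ x) →
          (∀ x, ρ x ≤ R * (1 + ‖x‖ ^ 2) ^ (δ / 2)) →
          (∀ x : EuclideanSpace ℝ (Fin d), r₀ ≤ ‖x‖ → ρ x ≤ η * ‖x‖) →
        ∀ ω : Set (EuclideanSpace ℝ (Fin d)), MeasurableSet ω →
          (∀ x, ENNReal.ofReal (γ₀ / (1 + ‖x‖ ^ a)) * volume (Metric.ball x (ρ x)) ≤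
            volume (Metric.ball x (ρ x) ∩ ω)) →
        ∀ ε : ℝ, 0 < ε → ε ≤ 1 →
          (eLpNorm f 2 volume) ^ 2 ≤
            ENNReal.ofReal
                (Real.exp (K *
                  (1 + Real.log (1 / ε) + D₂ ^ ((4 : ℝ) / (1 - (δ * ν + μ)))) ^ 2)) *
              (eLpNorm f 2 (volume.restrict ω)) ^ 2 +
            ENNReal.ofReal (ε * D₁ ^ 2) := by
  classical
  obtain ⟨A, hA, herr⟩ := UP_err d ν μ δ R η r₀ hν hμ0 hμ1 hδ0 hδ1 hR hη1
  set s : ℝ := δ * ν + μ with hsd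
  set nb : ℝ := (Besicovitch.multiplicity (EuclideanSpace ℝ (Fin d)) : ℝ) with hnb
  have hnb0 : 0 ≤ nb := Nat.cast_nonneg _
  set vd : ℝ := (volume (Metric.ball (0 : EuclideanSpace ℝ (Fin d)) 1)).toReal with hvd
  have hvd0 : 0 ≤ vd := ENNReal.toReal_nonneg
  have hvde : volume (Metric.ball (0 : EuclideanSpace ℝ (Fin d)) 1) = ENNReal.ofReal vd :=
    (ENNReal.ofReal_toReal measure_ball_lt_top.ne).symm
  obtain ⟨q, hq⟩ : ∃ q : ℝ, 2 * q = d + 1 + 4 * nb * vd * (3 * R) ^ d :=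
    ⟨(d + 1 + 4 * nb * vd * (3 * R) ^ d) / 2, by ring⟩
  set E : ℝ := Real.exp 1 * (4 * d * A * Real.exp q) ^ (1 / (1 - s)) with hE
  have hd1 : (1:ℝ) ≤ d := by exact_mod_cast hd
  have hE0 : 0 ≤ E := by positivity
  set A' : ℝ := E + d with hA'
  have hA'1 : 1 ≤ A' := by linarith
  set K0 : ℝ := 4 * nb + 2 * (A' + 1) + 2 * (A' + 1) * (2 * 4 ^ (d+1) + (A' + 1) + (a + 1 + 1 / γ₀)) +
        (a + 1 + 1 / γ₀) with hK0
  have hK1 : 1 ≤ K0 := by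
    have h1 : 0 ≤ 1 / γ₀ := by positivity
    have h2 : 0 ≤ 2 * (A' + 1) * (2 * 4 ^ (d+1) + (A' + 1) + (a + 1 + 1 / γ₀)) := by positivity
    linarith
  refine ⟨K0, hK1, ?_⟩
  intro f D₁ D₂ hD1 hD2 hf hyp ρ _ hρ0 hρ1 hρ2 ω hω hdens ε hε0 hε1
  set T : ℝ := D₂ ^ ((4 : ℝ) / (1 - s)) with hT
  set X : ℝ := 1 + Real.log (1 / ε) + T with hX
  have hs1 : 0 < 1 - s := by linarith
  have hs0 : 0 ≤ s := by positivity
  have hTD : D₂ ≤ T := by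
    calc D₂ = D₂ ^ (1:ℝ) := (Real.rpow_one _).symm
      _ ≤ _ := by
        apply Real.rpow_le_rpow_of_exponent_le hD2
        rw [le_div_iff₀ hs1]; linarith
  have hL : 0 ≤ Real.log (1 / ε) := Real.log_nonneg (by rw [le_div_iff₀ hε0]; linarith)
  have hX1 : 1 ≤ X := by linarith
  have hXT : T ≤ X := by linarith
  have hexpL : Real.exp (Real.log (1 / ε)) = 1 / ε := Real.exp_log (by positivity)
  have hεX : Real.exp (-X) ≤ ε := by
    have h1 : 1 / ε ≤ Real.exp X := by
      rw [← hexpL]; apply Real.exp_le_exp.2; linarith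
    rw [Real.exp_neg, inv_le_comm₀ (Real.exp_pos _) hε0, ← one_div]; exact h1
  set m : ℕ := ⌈A' * X⌉₊ with hm
  have hmA : A' * X ≤ m := Nat.le_ceil _
  have hAX : 0 ≤ A' * X := by positivity
  have hmlt : (m:ℝ) ≤ (A' + 1) * X := by
    have := (Nat.ceil_lt_add_one hAX).le
    rw [← hm] at this
    linarith
  have hmX : X ≤ m := le_trans (le_mul_of_one_le_left (by linarith) hA'1) hmA
  have hm1 : 1 ≤ m := by
    have : (1:ℝ) ≤ m := hX1.trans hmX
    exact_mod_cast this
  have hdm : d ≤ m := by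
    have hdA : (d:ℝ) ≤ A' := by linarith
    have : (d:ℝ) ≤ m := le_trans (hdA.trans (le_mul_of_one_le_right (by linarith) hX1)) hmA
    exact_mod_cast this
  have hEm : E * T ≤ m := by
    refine le_trans ?_ hmA
    have : E ≤ A' := by linarith
    gcongr
  set Bd : ℝ := D₁ * (A * D₂ ^ 3) ^ m * (m.factorial : ℝ) ^ s with hBd
  have hBd0 : 0 ≤ Bd := by positivity
  have hQ := UP_Q d m hd A D₁ D₂ s q hA hD1 hD2 hs hEm
  rw [← hBd] at hQ
  set Q : ℝ := (4 * (d:ℝ)) ^ m * Bd / m.factorial with hQd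
  have hQ0 : 0 ≤ Q := by positivity
  set r : ℝ := Real.exp X with hr
  have hr1 : 1 ≤ r := Real.one_le_exp (by linarith)
  set γ : ℝ := γ₀ / (1 + r ^ a) with hγ
  have hra : 0 ≤ r ^ a := by positivity
  have hγp : 0 < γ := by positivity
  have hγl : γ ≤ 1 := by
    rw [hγ, div_le_one (by positivity)]; linarith
  set g : EuclideanSpace ℝ (Fin d) → ENNReal := fun y => ENNReal.ofReal (f y ^ 2) with hg
  have hrb : ∀ x : EuclideanSpace ℝ (Fin d), ‖x‖ ≤ r → ρ x ≤ 2 * R * r := by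
    intro x hx
    have h1 : 1 + ‖x‖ ^ 2 ≤ (2 * r) ^ 2 := by
      have k1 : ‖x‖ ^ 2 ≤ r ^ 2 := pow_le_pow_left₀ (norm_nonneg x) hx 2
      have k2 : 1 ≤ r ^ 2 := one_le_pow₀ hr1
      have k3 : (2 * r) ^ 2 = 4 * r ^ 2 := by ring
      linarith
    have h0 : (1:ℝ) ≤ 1 + ‖x‖ ^ 2 := by
      have : 0 ≤ ‖x‖ ^ 2 := by positivity
      linarith
    calc ρ x ≤ R * (1 + ‖x‖ ^ 2) ^ (δ / 2) := hρ1 x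
      _ ≤ R * (1 + ‖x‖ ^ 2) ^ ((1:ℝ) / 2) := by
          gcongr
      _ ≤ R * ((2 * r) ^ 2) ^ ((1:ℝ) / 2) := by gcongr
      _ = R * (2 * r) := by
          rw [← Real.sqrt_eq_rpow, Real.sqrt_sq (by positivity)]
      _ = _ := by ring
  have hballs : ∀ x : EuclideanSpace ℝ (Fin d), ‖x‖ ≤ r → ∫⁻ y in Metric.ball x (ρ x), g y ≤
      ENNReal.ofReal (4 * (m * (4 ^ (d+1) * m / (γ/2)) ^ m) ^ 2 / γ) *
        (∫⁻ y in Metric.ball x (ρ x) ∩ ω, g y) +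
      ENNReal.ofReal (2 * Q ^ 2) * volume (Metric.ball x (ρ x)) := by
    intro x hx
    refine UP_ball f hf x (ρ x) γ Bd (hρ0 x) hγp hγl ω hω ?_ m hm1 hBd0 ?_
    · refine le_trans ?_ (hdens x)
      have hxa : ‖x‖ ^ a ≤ r ^ a := Real.rpow_le_rpow (norm_nonneg x) hx ha.le
      have hxa0 : 0 ≤ ‖x‖ ^ a := by positivity
      have hγx : γ ≤ γ₀ / (1 + ‖x‖ ^ a) := by
        rw [hγ]
        exact div_le_div_of_nonneg_left hγ0.le (by linarith) (by linarith)
      exact mul_le_mul_left (ENNReal.ofReal_le_ofReal hγx) _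
    · intro w hw z hz
      exact herr f D₁ D₂ hD1 hD2 hf hyp x (ρ x) (hρ0 x) (hρ1 x) (hρ2 x) m hm1 hdm w hw z hz
  have hcov := UP_cover d g ω hω ρ hρ0 r (2 * R * r) hrb _ _ hballs
  have hnbe : (Besicovitch.multiplicity (EuclideanSpace ℝ (Fin d)) : ENNReal) =
      ENNReal.ofReal nb := by rw [hnb, ENNReal.ofReal_natCast]
  have hvol : volume (Metric.ball (0 : EuclideanSpace ℝ (Fin d)) (r + 2 * R * r)) ≤
      ENNReal.ofReal ((3 * R * r) ^ d * vd) := by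
    have h1 : r + 2 * R * r ≤ 3 * R * r := by
      have k1 : r ≤ R * r := le_mul_of_one_le_left (by linarith) hR
      linarith
    refine (measure_mono (Metric.ball_subset_ball h1)).trans ?_
    have h2 := Measure.addHaar_ball_of_pos (volume : Measure (EuclideanSpace ℝ (Fin d))) 0
      (r := 3 * R * r) (by positivity)
    rw [h2, finrank_euclideanSpace_fin, hvde, ENNReal.ofReal_mul (by positivity)]
  have hN2 := UP_N2 d m D₁ nb vd R X ε Q q hnb0 hvd0 hR hX1 hεX hmX hq hQ0 hQ
  have hN3 := UP_N3 d m nb γ₀ a X (A' + 1) hnb0 hγ0 ha hX1 (by linarith) hmlt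
  rw [← hr] at hN2 hN3
  rw [← hγ, ← hK0] at hN3
  have hin : ∫⁻ y in {y : EuclideanSpace ℝ (Fin d) | ‖y‖ ≤ r}, g y ≤
      ENNReal.ofReal (Real.exp (K0 * X ^ 2)) * (∫⁻ y in ω, g y) +
        ENNReal.ofReal (ε * D₁ ^ 2 / 2) := by
    refine hcov.trans ?_
    rw [hnbe, mul_add, ← mul_assoc, ← ENNReal.ofReal_mul hnb0]
    refine add_le_add ?_ ?_
    · gcongr
    · calc ENNReal.ofReal nb * (ENNReal.ofReal (2 * Q ^ 2) *
            volume (Metric.ball (0 : EuclideanSpace ℝ (Fin d)) (r + 2 * R * r)))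
          ≤ ENNReal.ofReal nb * (ENNReal.ofReal (2 * Q ^ 2) *
            ENNReal.ofReal ((3 * R * r) ^ d * vd)) := by gcongr
        _ = ENNReal.ofReal (nb * ((2 * Q ^ 2) * ((3 * R * r) ^ d * vd))) := by
            rw [← ENNReal.ofReal_mul (by positivity), ← ENNReal.ofReal_mul hnb0]
        _ ≤ _ := ENNReal.ofReal_le_ofReal hN2
  have hout : ∫⁻ y in {y : EuclideanSpace ℝ (Fin d) | ‖y‖ ≤ r}ᶜ, g y ≤
      ENNReal.ofReal (ε * D₁ ^ 2 / 2) := by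
    have h1 := hyp 1 (fun _ => 0)
    rw [UP_mderiv_zero] at h1
    simp only [Nat.cast_one, Finset.sum_const_zero, add_zero, pow_one, Nat.factorial_one,
      Nat.factorial_zero, Real.one_rpow, mul_one] at h1
    refine (UP_tail f (D₁ * D₂) r (by positivity) (by positivity) h1).trans ?_
    apply ENNReal.ofReal_le_ofReal
    rw [div_le_iff₀ (by positivity)]
    have e1 : r ^ 2 = Real.exp 1 ^ 2 * Real.exp (Real.log (1/ε)) ^ 2 * Real.exp T ^ 2 := by
      rw [hr, hX, Real.exp_add, Real.exp_add]; ring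
    have e2 : (2:ℝ) ≤ Real.exp 1 ^ 2 := by
      have k1 := Real.add_one_le_exp (1:ℝ)
      have k2 : (2:ℝ) ^ 2 ≤ Real.exp 1 ^ 2 := pow_le_pow_left₀ (by norm_num) (by linarith) 2
      linarith
    have e3 : D₂ ≤ Real.exp T := by
      have := Real.add_one_le_exp T; linarith
    have e4 : 1 / ε ≤ (1 / ε) ^ 2 := by
      have : 1 ≤ 1 / ε := by rw [le_div_iff₀ hε0]; linarith
      exact le_self_pow₀ this (by norm_num)
    have e5 : 2 * (1 / ε) * D₂ ^ 2 ≤ r ^ 2 := by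
      rw [e1, hexpL]; gcongr
    calc (D₁ * D₂) ^ 2 = ε * D₁ ^ 2 / 2 * (2 * (1 / ε) * D₂ ^ 2) := by field_simp
      _ ≤ _ := by gcongr
  have hms : MeasurableSet {y : EuclideanSpace ℝ (Fin d) | ‖y‖ ≤ r} :=
    (isClosed_le (by fun_prop) (by fun_prop)).measurableSet
  rw [UP_eLp, UP_eLp, ← lintegral_add_compl _ hms]
  calc _ ≤ (ENNReal.ofReal (Real.exp (K0 * X ^ 2)) * (∫⁻ y in ω, g y) +
        ENNReal.ofReal (ε * D₁ ^ 2 / 2)) + ENNReal.ofReal (ε * D₁ ^ 2 / 2) := add_le_add hin hout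
    _ = _ := by
        rw [add_assoc, ← ENNReal.ofReal_add (by positivity) (by positivity), add_halves]
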